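/- arXiv:1807.00965 — 5 statements merged into one kernel-verified Lean document; each statement's English description precedes it below -/
import Mathlib

section
/- Let N be a finite group of odd order and let α be an automorphism of N of order 2. If the subgroup M = [N, α], generated by all elements n⁻¹·α(n) for n ∈ N, is nilpotent, then [N : F(N)] ≤ |C_N(α)|. -/
/-!
The subgroup `M = [N, α]` is normal, because
`g * (x⁻¹ * α x) * g⁻¹ = (x * g⁻¹)⁻¹ * α (x * g⁻¹) * (g * α g⁻¹)⁻¹`. Being nilpotent, it lies in the
Fitting subgroup `F`. Hence `α` maps each coset `n * F` to itself. Since `α` is an involution and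
`|n * F| = |F|` is odd, each coset contains a fixed point of `α`. So `C_N(α)` surjects onto `N ⧸ F`,
which is the asserted inequality.
-/

/-- The commutator subgroup `[N, α]` is normal in `N`. -/
lemma commutator_mulAut_normal {N : Type*} [Group N] (α : MulAut N) :
    (Subgroup.closure {x : N | ∃ n : N, x = n⁻¹ * α n}).Normal := by
  refine ⟨fun m hm g => ?_⟩
  induction hm using Subgroup.closure_induction with
  | mem x hx =>
    obtain ⟨n, rfl⟩ := hx
    have h : g * (n⁻¹ * α n) * g⁻¹ =
        ((n * g⁻¹)⁻¹ * α (n * g⁻¹)) * ((g⁻¹)⁻¹ * α g⁻¹)⁻¹ := by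
      simp only [map_mul]; group
    rw [h]
    exact mul_mem (Subgroup.subset_closure ⟨_, rfl⟩)
      (inv_mem (Subgroup.subset_closure ⟨_, rfl⟩))
  | one => simp
  | mul x y _ _ hx hy => simpa [mul_assoc] using mul_mem hx hy
  | inv x _ hx => simpa [mul_assoc] using inv_mem hx

/-- If `F` has odd order and contains every `n⁻¹ * α n`, then each left coset of `F` contains a
fixed point of the involution `α`. -/
lemma exists_fixedPoint_in_coset {N : Type*} [Group N] [Finite N] (α : MulAut N)
    (hα : ∀ n, α (α n) = n) (F : Subgroup N) (hF : Odd (Nat.card F))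
    (hcomm : ∀ n, n⁻¹ * α n ∈ F) (n : N) : ∃ f ∈ F, α (n * f) = n * f := by
  classical
  have : Fintype F := Fintype.ofFinite F
  -- the action of `α` on the coset `n * F`, transported to `F` along `f ↦ n * f`
  let σ : F → F := fun f => ⟨n⁻¹ * α (n * f), by
    have h : n⁻¹ * α (n * f) = f * ((n * f)⁻¹ * α (n * f)) := by group
    rw [h]
    exact mul_mem f.2 (hcomm _)⟩
  have hσ : Function.Involutive σ := fun f => by
    ext
    simp [σ, hα]
  obtain ⟨f, hf⟩ := Equiv.Perm.exists_fixed_point_of_prime (p := 2) (n := 1)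
    (by rw [← Nat.card_eq_fintype_card]; exact hF.not_two_dvd_nat)
    (σ := hσ.toPerm) (by ext f; simp [sq, hσ f])
  refine ⟨f, f.2, ?_⟩
  have h : n⁻¹ * α (n * f) = f := congrArg Subtype.val hf
  rw [inv_mul_eq_iff_eq_mul] at h
  exact h

/-- **Theorem 3, nilpotent case.** Let `N` be a finite group of odd order and `α` an
automorphism of `N` of order `2`.  If the subgroup `M = [N, α]`, generated by all
`n⁻¹ * α n` for `n ∈ N`, is nilpotent, then `[N : F(N)] ≤ |C_N(α)|`. -/
theorem index_fitting_le_fixedPoints_of_commutator_nilpotent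
    {N : Type*} [Group N] [Finite N] (hN : Odd (Nat.card N))
    (α : MulAut N) (hα : orderOf α = 2)
    (M : Subgroup N) (hM : M = Subgroup.closure {x : N | ∃ n : N, x = n⁻¹ * α n})
    (hMnil : Group.IsNilpotent M)
    (F : Subgroup N) (hFn : F.Normal) (hFnil : Group.IsNilpotent F)
    (hFmax : ∀ K : Subgroup N, K.Normal → Group.IsNilpotent K → K ≤ F) :
    F.index ≤ Nat.card {n : N // α n = n} := by
  have hMF : M ≤ F := hFmax M (hM ▸ commutator_mulAut_normal α) hMnil
  have hcomm : ∀ n, n⁻¹ * α n ∈ F := fun n =>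
    hMF (hM ▸ Subgroup.subset_closure ⟨n, rfl⟩)
  have hinv : ∀ n, α (α n) = n := fun n => by
    have h : α ^ 2 = 1 := hα ▸ pow_orderOf_eq_one α
    simpa [sq] using congrArg (fun β : MulAut N => β n) h
  have hF : Odd (Nat.card F) := hN.of_dvd_nat (Subgroup.card_subgroup_dvd_card F)
  refine Nat.card_le_card_of_surjective
    (fun c : {n : N // α n = n} => (QuotientGroup.mk c.1 : N ⧸ F)) fun q => ?_
  obtain ⟨n, rfl⟩ := QuotientGroup.mk_surjective q
  obtain ⟨f, hf, hfix⟩ := exists_fixedPoint_in_coset α hinv F hF hcomm n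
  exact ⟨⟨n * f, hfix⟩, QuotientGroup.mk_mul_of_mem n hf⟩
end

section
/- Let G be a finite group of even order and let t be an element of order 2 in G. Then every prime p dividing the index [G : F(G)] satisfies p ≤ |C_G(t)| + 1. -/
/-!
Write `n = |C_G(t)|` and suppose `p > n + 1`. The heart of the argument is that `G` then has a
nontrivial normal `p`-subgroup as soon as `p ∣ |G|` (`exists_orderOf_eq_forall_commute_conj`,
`exists_normal_isPGroup`). Applied to `G ⧸ O`, where `O` is a maximal normal `p`-subgroup of `G`
and where the centralizer of the image of `t` has order at most `n` (`card_centralizer_mk_le`),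
this forces `p ∤ [G : O]`. Since `O ≤ F(G)`, also `p ∤ [G : F(G)]`.

For the key fact, let `c` have order `p`, let `C = ⟨c⟩`, and let `B` be the set of `g` such that
`g c g⁻¹` does not commute with `c`; it is a union of `(C, C)`-double cosets. Two estimates are
compared.

* A conjugate `u` of `t` outside `B` inverts `c`: otherwise `c * (u c u⁻¹)` would be an
  element of order `p` centralized by `u`, although `p > n`. A coset `gC ⊆ B` contains at most one
  conjugate of `t`, because if `u` and `u x` (with `1 ≠ x ∈ C`) are both involutions, then `u`
  inverts `x`, hence normalizes `C`. So at most `|B| / p` conjugates of `t` fail to invert `c`;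
  equivalently, at most `n |B| / p` elements `g` are such that `t` does not invert `g c g⁻¹`.
  As `n < p`, some conjugate of `c` is inverted by `t`, so `c` itself may be assumed to be.
* If `t` inverts `c`, then a coset `Cg ⊆ B` contains at most one `h` such that `t` inverts
  `h c h⁻¹`: if `g` and `x g` are two of them, then `t` and `x⁻¹ t x = t x²` both invert
  `g c g⁻¹`, so `x²`, hence `c`, commutes with `g c g⁻¹`. So at least `(1 - 1/p) |B|` elements `g`
  are such that `t` does not invert `g c g⁻¹`.

Together, `(p - 1) |B| ≤ n |B|`, so `B` is empty: all conjugates of `c` commute with each other and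
generate a normal abelian `p`-subgroup.
-/

/-! ### Counting conjugates and coset representatives -/

open Finset in
/-- The fibres of `g ↦ g⁻¹ t g` are cosets of the centralizer of `t`. -/
lemma card_le_card_centralizer_mul {G : Type*} [Group G] [Finite G] (t : G) (S T : Finset G)
    (h : ∀ g ∈ S, g⁻¹ * t * g ∈ T) :
    #S ≤ Nat.card (Subgroup.centralizer {t} : Subgroup G) * #T := by
  classical
  refine card_le_mul_card_image_of_maps_to h _ fun a _ => ?_
  rcases (S.filter fun g => g⁻¹ * t * g = a).eq_empty_or_nonempty with h0 | ⟨g₀, hg₀⟩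
  · simp [h0]
  · have hf : ∀ g ∈ S.filter (fun g => g⁻¹ * t * g = a),
        g * g₀⁻¹ ∈ Subgroup.centralizer ({t} : Set G) := by
      intro g hg
      rw [mem_filter] at hg hg₀
      rw [Subgroup.mem_centralizer_singleton_iff]
      have e := hg.2.trans hg₀.2.symm
      calc g * g₀⁻¹ * t = g * (g₀⁻¹ * t * g₀) * g₀⁻¹ := by group
        _ = g * (g⁻¹ * t * g) * g₀⁻¹ := by rw [e]
        _ = t * (g * g₀⁻¹) := by group
    have hinj : Function.Injective (fun g : S.filter (fun g => g⁻¹ * t * g = a) =>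
        (⟨g * g₀⁻¹, hf g g.2⟩ : Subgroup.centralizer ({t} : Set G))) := by
      intro g g' h
      exact Subtype.ext (mul_right_cancel (Subtype.ext_iff.1 h))
    have hle := Nat.card_le_card_of_injective _ hinj
    rwa [Nat.card_eq_fintype_card, Fintype.card_coe] at hle

open Finset in
/-- If `S ⊆ B`, the set `B` is stable under right multiplication by `C`, and every coset `gC`
contains at most one element of `S`, then `|C| |S| ≤ |B|`. -/
lemma card_mul_card_le_of_right {G : Type*} [Group G] [Finite G] (C : Subgroup G)
    (S B : Finset G) (hB : ∀ g ∈ S, ∀ x ∈ C, g * x ∈ B)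
    (hS : ∀ g ∈ S, ∀ x ∈ C, g * x ∈ S → x = 1) :
    Nat.card C * #S ≤ #B := by
  classical
  have : Function.Injective (fun a : C × S => (⟨a.2 * a.1, hB _ a.2.2 _ a.1.2⟩ : B)) := by
    rintro ⟨⟨x, hx⟩, ⟨s, hs⟩⟩ ⟨⟨y, hy⟩, ⟨r, hr⟩⟩ h
    have h : s * x = r * y := by simpa using h
    have h1 : s * (x * y⁻¹) = r := by rw [← mul_assoc, h]; group
    have h2 := hS s hs (x * y⁻¹) (C.mul_mem hx (C.inv_mem hy)) (h1 ▸ hr)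
    have h3 : x = y := mul_inv_eq_one.1 h2
    subst h3
    have h4 : s = r := mul_right_cancel h
    subst h4
    rfl
  simpa using Nat.card_le_card_of_injective _ this

/-- `card_mul_card_le_of_right` for cosets `Cg`. -/
lemma card_mul_card_le_of_left {G : Type*} [Group G] [Finite G] (C : Subgroup G)
    (S B : Finset G) (hB : ∀ g ∈ S, ∀ x ∈ C, x * g ∈ B)
    (hS : ∀ g ∈ S, ∀ x ∈ C, x * g ∈ S → x = 1) :
    Nat.card C * S.card ≤ B.card := by
  classical
  have := card_mul_card_le_of_right C (S.map (Equiv.inv G).toEmbedding)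
    (B.map (Equiv.inv G).toEmbedding)
    (by
      intro g hg x hx
      simp only [Finset.mem_map_equiv, Equiv.inv_symm, Equiv.inv_apply, mul_inv_rev] at hg ⊢
      exact hB _ hg _ (C.inv_mem hx))
    (by
      intro g hg x hx
      simp only [Finset.mem_map_equiv, Equiv.inv_symm, Equiv.inv_apply, mul_inv_rev] at hg ⊢
      exact fun h => inv_eq_one.1 (hS _ hg _ (C.inv_mem hx) h))
  simpa using this

/-! ### Involutions and elements of prime order -/

/-- If `t c t⁻¹` commutes with `c`, then `t` centralizes `t c t⁻¹ * c`, whose order divides `p`; as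
`p` does not divide `|C_G(t)|`, this product is trivial. -/
lemma conj_eq_inv_of_commute {G : Type*} [Group G] [Finite G] {p : ℕ} (hp : p.Prime) {t c : G}
    (ht : t * t = 1) (hn : Nat.card (Subgroup.centralizer {t} : Subgroup G) < p)
    (hc : c ^ p = 1) (h : Commute (t * c * t⁻¹) c) : t * c * t⁻¹ = c⁻¹ := by
  have hti : t⁻¹ = t := inv_eq_of_mul_eq_one_right ht
  have hw : t * c * t⁻¹ * c ∈ Subgroup.centralizer ({t} : Set G) := by
    rw [Subgroup.mem_centralizer_singleton_iff]
    calc t * c * t⁻¹ * c * t = t * (c * (t * c * t⁻¹)) := by rw [hti]; simp only [mul_assoc]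
      _ = t * (t * c * t⁻¹ * c) := by rw [h.eq]
  have hwp : (t * c * t⁻¹ * c) ^ p = 1 := by
    rw [h.mul_pow, conj_pow, hc]; simp
  have hcop : (Nat.card (Subgroup.centralizer {t} : Subgroup G)).Coprime p :=
    (Nat.coprime_of_lt_prime Nat.card_pos.ne' hn hp).symm
  have h1 : orderOf (t * c * t⁻¹ * c) ∣ 1 := by
    rw [← hcop.gcd_eq_one]
    exact Nat.dvd_gcd (Subgroup.orderOf_dvd_natCard _ hw) (orderOf_dvd_of_pow_eq_one hwp)
  have h2 := orderOf_eq_one_iff.1 (Nat.dvd_one.1 h1)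
  exact eq_inv_of_mul_eq_one_left h2

/-- An element commuting with a nontrivial power of `c`, where `c` has prime order, commutes
with `c`. -/
lemma commute_of_commute_zpowers {G : Type*} [Group G] {p : ℕ} (hp : p.Prime) {c x d : G}
    (hc : orderOf c = p) (hx : x ∈ Subgroup.zpowers c) (hx1 : x ≠ 1) (h : Commute d x) :
    Commute d c := by
  have := Fact.mk hp
  have hcx : (⟨c, Subgroup.mem_zpowers c⟩ : Subgroup.zpowers c) ∈
      Subgroup.zpowers (⟨x, hx⟩ : Subgroup.zpowers c) :=
    mem_zpowers_of_prime_card (p := p) (by rw [Nat.card_zpowers, hc])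
      (fun h => hx1 (Subtype.ext_iff.1 h))
  obtain ⟨k, hk⟩ := hcx
  have hk : x ^ k = c := by simpa using Subtype.ext_iff.1 hk
  rw [← hk]
  exact h.zpow_right k

/-! ### The two estimates -/

open Classical in
/-- The elements `g` such that `g c g⁻¹` does not commute with `c`. -/
noncomputable def noncommConj {G : Type*} [Group G] [Fintype G] (c : G) : Finset G :=
  Finset.univ.filter fun g => ¬ Commute (g * c * g⁻¹) c

open Classical in
/-- The elements `g` such that `t` does not invert `g c g⁻¹`. -/
noncomputable def noninvConj {G : Type*} [Group G] [Fintype G] (t c : G) : Finset G :=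
  Finset.univ.filter fun g => t * (g * c * g⁻¹) * t⁻¹ ≠ (g * c * g⁻¹)⁻¹

lemma mem_noncommConj {G : Type*} [Group G] [Fintype G] {c g : G} :
    g ∈ noncommConj c ↔ ¬ Commute (g * c * g⁻¹) c := by
  simp [noncommConj]

lemma mem_noninvConj {G : Type*} [Group G] [Fintype G] {t c g : G} :
    g ∈ noninvConj t c ↔ t * (g * c * g⁻¹) * t⁻¹ ≠ (g * c * g⁻¹)⁻¹ := by
  simp [noninvConj]

lemma mul_mem_noncommConj {G : Type*} [Group G] [Fintype G] {c g x : G}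
    (hx : x ∈ Subgroup.zpowers c) (hg : g ∈ noncommConj c) : g * x ∈ noncommConj c := by
  rw [mem_noncommConj] at hg ⊢
  have hxc : Commute x c := by
    obtain ⟨k, rfl⟩ := hx
    exact (Commute.refl c).zpow_left k
  have : g * x * c * (g * x)⁻¹ = g * c * g⁻¹ := by
    rw [mul_assoc g x c, hxc.eq]; group
  rwa [this]

lemma mul_mem_noncommConj_left {G : Type*} [Group G] [Fintype G] {c g x : G}
    (hx : x ∈ Subgroup.zpowers c) (hg : g ∈ noncommConj c) : x * g ∈ noncommConj c := by
  rw [mem_noncommConj] at hg ⊢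
  have hxc : Commute x c := by
    obtain ⟨k, rfl⟩ := hx
    exact (Commute.refl c).zpow_left k
  have h1 : x * g * c * (x * g)⁻¹ = x * (g * c * g⁻¹) * x⁻¹ := by group
  have h2 : c = x * c * x⁻¹ := by rw [hxc.eq]; group
  rw [h1]
  intro h
  have h3 : Commute (x * (g * c * g⁻¹) * x⁻¹) (x * c * x⁻¹) := by rwa [← h2]
  exact hg ((Commute.conj_iff x).1 h3)

/-- The upper estimate: at most `|B| / p` conjugates of `t` fail to invert `c`, where `B` is
`noncommConj c`, since they all lie in `B` and in distinct cosets of `⟨c⟩`. -/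
lemma mul_card_noninvConj_le {G : Type*} [Group G] [Fintype G] {p : ℕ} (hp : p.Prime) {t c : G}
    (ht : t * t = 1) (hn : Nat.card (Subgroup.centralizer {t} : Subgroup G) < p)
    (hc : orderOf c = p) :
    p * (noninvConj t c).card ≤
      Nat.card (Subgroup.centralizer {t} : Subgroup G) * (noncommConj c).card := by
  classical
  set T := (noncommConj c).filter fun u => u * u = 1 with hT
  have h1 : (noninvConj t c).card ≤
      Nat.card (Subgroup.centralizer {t} : Subgroup G) * T.card := by
    refine card_le_card_centralizer_mul t _ _ fun g hg => ?_
    rw [mem_noninvConj] at hg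
    rw [hT, Finset.mem_filter, mem_noncommConj]
    refine ⟨fun h => hg ?_, ?_⟩
    · apply conj_eq_inv_of_commute hp ht hn
      · rw [conj_pow, ← hc, pow_orderOf_eq_one]; simp
      · have := (Commute.conj_iff g).2 h
        convert this using 1
        group
    · calc g⁻¹ * t * g * (g⁻¹ * t * g) = g⁻¹ * (t * t) * g := by group
        _ = 1 := by rw [ht]; group
  have h2 : p * T.card ≤ (noncommConj c).card := by
    rw [← hc, ← Nat.card_zpowers]
    refine card_mul_card_le_of_right _ _ _ (fun u hu x hx => ?_) fun u hu x hx hux => ?_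
    · exact mul_mem_noncommConj hx (Finset.mem_filter.1 hu).1
    · by_contra hx1
      obtain ⟨hu, hu2⟩ := Finset.mem_filter.1 hu
      obtain ⟨-, hux2⟩ := Finset.mem_filter.1 hux
      have hui : u⁻¹ = u := inv_eq_of_mul_eq_one_right hu2
      -- two involutions `u`, `u * x` force `u` to invert `x`
      have hinv : u * x * u⁻¹ = x⁻¹ := by
        rw [hui]
        exact eq_inv_of_mul_eq_one_left (by simpa [mul_assoc] using hux2)
      have hxc : Commute x c := by
        obtain ⟨k, rfl⟩ := hx
        exact (Commute.refl c).zpow_left k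
      have h3 : Commute (u * c * u⁻¹) x := by
        have := (Commute.conj_iff u).2 hxc.symm
        rw [hinv] at this
        simpa using this.inv_right
      exact mem_noncommConj.1 hu (commute_of_commute_zpowers hp hc hx hx1 h3)
  calc p * (noninvConj t c).card
      ≤ p * (Nat.card (Subgroup.centralizer {t} : Subgroup G) * T.card) := by gcongr
    _ = Nat.card (Subgroup.centralizer {t} : Subgroup G) * (p * T.card) := by ring
    _ ≤ _ := by gcongr

/-- The lower estimate: if `t` inverts `c`, every coset `⟨c⟩g` inside `noncommConj c` contains at
most one `h` such that `t` inverts `h c h⁻¹`. -/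
lemma mul_card_noncommConj_le {G : Type*} [Group G] [Fintype G] {p : ℕ} (hp : p.Prime)
    (hp2 : 2 < p) {t c : G} (hc : orderOf c = p) (htc : t * c * t⁻¹ = c⁻¹) :
    p * (noncommConj c).card ≤ p * (noninvConj t c).card + (noncommConj c).card := by
  classical
  have h1 : p * (noncommConj c \ noninvConj t c).card ≤ (noncommConj c).card := by
    rw [← hc, ← Nat.card_zpowers]
    refine card_mul_card_le_of_left _ _ _ (fun g hg x hx => ?_) fun g hg x hx hxg => ?_
    · exact mul_mem_noncommConj_left hx (Finset.mem_sdiff.1 hg).1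
    · by_contra hx1
      obtain ⟨hgB, hg⟩ := Finset.mem_sdiff.1 hg
      obtain ⟨-, hxg⟩ := Finset.mem_sdiff.1 hxg
      rw [mem_noninvConj, not_not] at hg hxg
      have htx : t * x * t⁻¹ = x⁻¹ := by
        obtain ⟨k, rfl⟩ := hx
        simp only
        rw [← conj_zpow, htc, inv_zpow]
      set d := g * c * g⁻¹ with hd
      have e : x * g * c * (x * g)⁻¹ = x * d * x⁻¹ := by rw [hd]; group
      rw [e] at hxg
      have e2 : t * (x * d * x⁻¹) * t⁻¹ = (t * x * t⁻¹) * (t * d * t⁻¹) * (t * x * t⁻¹)⁻¹ := by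
        group
      rw [e2, htx, hg] at hxg
      -- `hxg` now says that conjugation by `x⁻¹` and by `x` agree on `d⁻¹`
      have hcomm : Commute d (x * x) := by
        have h3 : x⁻¹ * d⁻¹ * x = x * d⁻¹ * x⁻¹ := by
          simpa [mul_assoc] using hxg
        have h4 : d⁻¹ * (x * x) = (x * x) * d⁻¹ := by
          calc d⁻¹ * (x * x) = x * (x⁻¹ * d⁻¹ * x) * x := by group
            _ = x * (x * d⁻¹ * x⁻¹) * x := by rw [h3]
            _ = (x * x) * d⁻¹ := by group
        exact Commute.inv_left_iff.1 h4
      have hxx : x * x ≠ 1 := by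
        intro h
        have h5 : orderOf x ∣ p := hc ▸ orderOf_dvd_of_mem_zpowers hx
        have h6 : orderOf x ∣ 2 := orderOf_dvd_of_pow_eq_one (by rw [pow_two, h])
        rcases (Nat.dvd_prime hp).1 h5 with h7 | h7
        · exact hx1 (orderOf_eq_one_iff.1 h7)
        · rw [h7] at h6
          exact absurd (Nat.le_of_dvd (by norm_num) h6) (by omega)
      exact mem_noncommConj.1 hgB
        (commute_of_commute_zpowers hp hc (mul_mem hx hx) hxx hcomm)
  have h2 : (noncommConj c).card ≤
      (noninvConj t c).card + (noncommConj c \ noninvConj t c).card := by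
    have := Finset.le_card_sdiff (noninvConj t c) (noncommConj c)
    omega
  nlinarith

/-! ### Normal `p`-subgroups -/

/-- An element `c` of order `p` inverted by `t` exists by the upper estimate; comparing the two
estimates for it shows that `noncommConj c` is empty. -/
lemma exists_orderOf_eq_forall_commute_conj {G : Type*} [Group G] [Finite G] {p : ℕ}
    (hp : p.Prime) {t : G} (ht : t * t = 1)
    (hn : Nat.card (Subgroup.centralizer {t} : Subgroup G) + 1 < p) (hpG : p ∣ Nat.card G) :
    ∃ c : G, orderOf c = p ∧ ∀ g : G, Commute (g * c * g⁻¹) c := by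
  classical
  have := Fintype.ofFinite G
  have := Fact.mk hp
  have hpos : 0 < Nat.card (Subgroup.centralizer {t} : Subgroup G) := Nat.card_pos
  obtain ⟨c₀, hc₀⟩ := exists_prime_orderOf_dvd_card' p hpG
  obtain ⟨g₀, hg₀⟩ : ∃ g₀, g₀ ∉ noninvConj t c₀ := by
    by_contra! hall
    have h1 := mul_card_noninvConj_le hp ht (by omega) hc₀
    have h2 : noninvConj t c₀ = Finset.univ := Finset.eq_univ_iff_forall.2 hall
    have h3 : (noncommConj c₀).card ≤ Fintype.card G := Finset.card_le_univ _
    have h4 : 0 < Fintype.card G := Fintype.card_pos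
    rw [h2, Finset.card_univ] at h1
    nlinarith
  rw [mem_noninvConj, not_not] at hg₀
  have hc : orderOf (g₀ * c₀ * g₀⁻¹) = p := by
    rw [← hc₀]
    exact (MulAut.conj g₀).orderOf_eq c₀
  refine ⟨g₀ * c₀ * g₀⁻¹, hc, fun g => ?_⟩
  by_contra hg
  have hB : 0 < (noncommConj (g₀ * c₀ * g₀⁻¹)).card :=
    Finset.card_pos.2 ⟨g, mem_noncommConj.2 hg⟩
  have h1 := mul_card_noninvConj_le hp ht (by omega) hc
  have h2 := mul_card_noncommConj_le hp (by omega) hc hg₀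
  nlinarith

/-- The normal closure of an element `c` of order `p` which commutes with all its conjugates is
an abelian group of exponent `p`. -/
lemma exists_normal_isPGroup {G : Type*} [Group G] [Finite G] {p : ℕ}
    (hp : p.Prime) {t : G} (ht : t * t = 1)
    (hn : Nat.card (Subgroup.centralizer {t} : Subgroup G) + 1 < p) (hpG : p ∣ Nat.card G) :
    ∃ N : Subgroup G, N.Normal ∧ IsPGroup p N ∧ N ≠ ⊥ := by
  obtain ⟨c, hc, hcomm⟩ := exists_orderOf_eq_forall_commute_conj hp ht hn hpG
  refine ⟨Subgroup.normalClosure {c}, inferInstance, ?_, ?_⟩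
  · have hset : ∀ x ∈ Group.conjugatesOfSet {c}, ∃ g, x = g * c * g⁻¹ := by
      intro x hx
      obtain ⟨a, ha, hax⟩ := Group.mem_conjugatesOfSet_iff.1 hx
      obtain rfl := Set.mem_singleton_iff.1 ha
      obtain ⟨g, hg⟩ := isConj_iff.1 hax
      exact ⟨g, hg.symm⟩
    have hC : IsMulCommutative (Subgroup.normalClosure {c}) := by
      refine Subgroup.isMulCommutative_closure fun x hx y hy => ?_
      obtain ⟨g, rfl⟩ := hset x hx
      obtain ⟨h, rfl⟩ := hset y hy
      have := (Commute.conj_iff h).2 (hcomm (h⁻¹ * g))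
      have e : h * (h⁻¹ * g * c * (h⁻¹ * g)⁻¹) * h⁻¹ = g * c * g⁻¹ := by group
      rw [e] at this
      exact this
    rintro ⟨x, hx⟩
    refine ⟨1, Subtype.ext ?_⟩
    simp only [pow_one, SubmonoidClass.mk_pow, OneMemClass.coe_one]
    induction hx using Subgroup.closure_induction with
    | mem x hx =>
      obtain ⟨g, rfl⟩ := hset x hx
      rw [conj_pow, ← hc, pow_orderOf_eq_one]; simp
    | one => simp
    | mul x y hx hy ihx ihy =>
      have hxy : Commute x y :=
        setLike_mul_comm (s := Subgroup.normalClosure {c}) hx hy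
      rw [hxy.mul_pow, ihx, ihy, one_mul]
    | inv x hx ih => rw [inv_pow, ih, inv_one]
  · intro h
    have hc1 : c ∈ Subgroup.normalClosure {c} := Subgroup.subset_normalClosure rfl
    rw [h, Subgroup.mem_bot] at hc1
    rw [hc1, orderOf_one] at hc
    exact hp.one_lt.ne hc

/-- Centralizers do not grow in quotients: the preimage `D` of the centralizer of `tN` conjugates
`t` into `tN`, so `|D| ≤ |C_G(t)| |N|`. -/
lemma card_centralizer_mk_le {G : Type*} [Group G] [Finite G] (N : Subgroup G) [N.Normal] (t : G) :
    Nat.card (Subgroup.centralizer {(t : G ⧸ N)} : Subgroup (G ⧸ N)) ≤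
      Nat.card (Subgroup.centralizer {t} : Subgroup G) := by
  classical
  have := Fintype.ofFinite G
  set Z : Subgroup (G ⧸ N) := Subgroup.centralizer {(t : G ⧸ N)} with hZ
  set D : Subgroup G := Z.comap (QuotientGroup.mk' N) with hD
  have h1 : Nat.card D = Nat.card N * Nat.card Z := by
    have hi : D.index = Z.index :=
      Subgroup.index_comap_of_surjective _ (QuotientGroup.mk'_surjective N)
    have e1 := D.card_mul_index
    have e2 := Z.card_mul_index
    have e3 := N.card_mul_index
    rw [Subgroup.index_eq_card N] at e3
    have hpos : 0 < Z.index := Nat.pos_of_ne_zero Subgroup.index_ne_zero_of_finite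
    apply Nat.eq_of_mul_eq_mul_right hpos
    rw [← hi, e1, hi, mul_assoc, e2, e3]
  have h2 : Nat.card D ≤ Nat.card (Subgroup.centralizer {t} : Subgroup G) * Nat.card N := by
    have := card_le_card_centralizer_mul t (Finset.univ.filter (· ∈ D))
      ((Finset.univ.filter (· ∈ N)).map (Equiv.mulLeft t).toEmbedding) (by
        intro g hg
        simp only [Finset.mem_filter, Finset.mem_univ, true_and] at hg
        rw [Finset.mem_map_equiv]
        simp only [Finset.mem_filter, Finset.mem_univ, true_and]
        have hg' : (g : G ⧸ N) * t = t * g := by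
          have : (g : G ⧸ N) ∈ Z := hg
          rwa [hZ, Subgroup.mem_centralizer_singleton_iff] at this
        have : t⁻¹ * (g⁻¹ * t * g) ∈ N := by
          rw [← QuotientGroup.eq]
          rw [QuotientGroup.mk_mul, QuotientGroup.mk_mul, QuotientGroup.mk_inv, mul_assoc, ← hg',
            inv_mul_cancel_left]
        simpa using this)
    rw [Finset.card_map] at this
    simpa [Nat.card_eq_fintype_card, Fintype.card_subtype] using this
  rw [h1, mul_comm] at h2
  exact Nat.le_of_mul_le_mul_right h2 Nat.card_pos

/-! ### The index of the Fitting subgroup -/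

/-- **Theorem 6.** If `G` is a finite group of even order and `t ∈ G` is an involution,
then every prime divisor `p` of `[G : F(G)]` satisfies `p ≤ |C_G(t)| + 1`, where `F` is the
Fitting subgroup of `G`. -/
theorem prime_dvd_index_fitting_le_centralizer_add_one
    {G : Type*} [Group G] [Finite G] (hG : Even (Nat.card G))
    (t : G) (ht : orderOf t = 2)
    (F : Subgroup G) (hFn : F.Normal) (hFnil : Group.IsNilpotent F)
    (hFmax : ∀ K : Subgroup G, K.Normal → Group.IsNilpotent K → K ≤ F) :
    ∀ p : ℕ, p.Prime → p ∣ F.index →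
      p ≤ Nat.card (Subgroup.centralizer {t} : Subgroup G) + 1 := by
  intro p hp hpF
  by_contra! hlt
  have := Fact.mk hp
  obtain ⟨O, ⟨hOn, hOp⟩, hOmax⟩ := Set.Finite.exists_maximal
    (Set.toFinite {N : Subgroup G | N.Normal ∧ IsPGroup p N})
    ⟨⊥, inferInstance, IsPGroup.of_bot⟩
  have hOF : O ≤ F := hFmax O hOn hOp.isNilpotent
  have hdvd : p ∣ Nat.card (G ⧸ O) := by
    rw [← Subgroup.index_eq_card]
    exact hpF.trans (Subgroup.index_dvd_of_le hOF)
  have htt : t * t = 1 := by rw [← pow_two, ← ht, pow_orderOf_eq_one]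
  obtain ⟨N, hNn, hNp, hN⟩ := exists_normal_isPGroup (t := (t : G ⧸ O)) hp
    (by rw [← QuotientGroup.mk_mul, htt, QuotientGroup.mk_one])
    (lt_of_le_of_lt (Nat.succ_le_succ (card_centralizer_mk_le O t)) hlt) hdvd
  have hle : N.comap (QuotientGroup.mk' O) ≤ O := by
    refine hOmax ⟨inferInstance, ?_⟩ (QuotientGroup.le_comap_mk' O N)
    exact hNp.comap_of_ker_isPGroup _ (by rwa [QuotientGroup.ker_mk'])
  apply hN
  rw [eq_bot_iff]
  intro x hx
  obtain ⟨g, rfl⟩ := QuotientGroup.mk'_surjective O x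
  exact (QuotientGroup.eq_one_iff g).2 (hle hx)
end

section
/- Let X be a nilpotent finite group of odd order acting faithfully by automorphisms on a nontrivial nilpotent finite group V of odd order, with gcd(|X|, |V|) = 1. Then X has at least two regular orbits on V (two distinct orbits on which the point stabilizers in X are trivial). In particular, |X| ≤ (|V| − 1)/2. -/
/-!
It suffices to find one element `v ≠ 1` of `V` with trivial stabilizer. Then `v⁻¹` has trivial
stabilizer as well, and `x • v = v⁻¹` would give `x ^ 2 • v = v`, so `x ^ 2 = 1`, `x = 1` and
`v = v⁻¹`, which is impossible in a nontrivial group of odd order. The two regular orbits avoid `1`,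
whence the bound.

*Reduction to abelian `V`.* The action stays faithful on the abelianization of `V`
(`abelianizedAction_injective`): a subgroup `A` of prime order acting trivially there fixes a point
in each coset of `[V, V]` by coprimality, so its fixed points together with `[V, V]` generate `V`,
and nilpotency of `V` shows that `A` fixes everything. An element whose image in the abelianization
is regular is itself regular.

*The abelian case* (`hasRegular_of_isNilpotent`) goes by induction on `|V|`, for the statement that
some vector has the kernel of the action as its stabilizer; the action may then be taken faithful.
* If some normal abelian subgroup `N` contains a nontrivial element fixing a nonzero vector, take a
  maximal stabilizer `K` in `N` of a nonzero vector and let `e` be the averaging operator over `K`.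
  By maximality, two conjugates of `e` under `X` are equal or orthogonal. If their sum is not the
  identity, `V` decomposes as a sum of two proper submodules and regular vectors of the summands add
  up to a regular vector (`SmallerRegular.of_decomposition`). Otherwise the conjugates of `e` form a
  system of imprimitivity; grouping them along a maximal, hence normal, subgroup `M` gives
  `V = ⨁ g • W` over `X ⧸ M`, and a vector regular for `M` on `W` is spread over the summands, with
  a sign change at one of them (`SmallerRegular.of_system`). Odd order ensures that the sign
  distinguishes this summand, and the result is regular.
* If all normal abelian subgroups act semiregularly on `V \ {0}`, so does `X`. Two commuting elements
  of order `p` in a semiregular group generate a cyclic group (`mem_zpowers_of_semiregular`), which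
  for odd `p` forces every Sylow subgroup of `X` to be cyclic (`eq_zpowers_of_normal_rank_one`). The
  Sylow subgroups are then themselves normal and abelian, so semiregular, and any nonzero vector is
  regular.
-/

namespace RegularOrbit

universe u v

/-! ### Normal subgroups of rank one in nilpotent groups -/

/-- The power formula for a product of two elements whose commutator `d` commutes with both. -/
lemma mul_pow_of_central_commutator {G : Type*} [Group G] {b y d : G}
    (h : y * b = d * b * y) (hb : Commute d b) (hy : Commute d y) (n : ℕ) :
    (b * y) ^ n = d ^ (n.choose 2) * (b ^ n * y ^ n) := by
  have hyn : ∀ n : ℕ, y ^ n * b = d ^ n * (b * y ^ n) := by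
    intro n
    induction n with
    | zero => simp
    | succ n ih =>
      calc y ^ (n + 1) * b = y * (y ^ n * b) := by rw [pow_succ']; group
        _ = y * d ^ n * (b * y ^ n) := by rw [ih]; group
        _ = d ^ n * y * (b * y ^ n) := by rw [(hy.pow_left n).eq]
        _ = d ^ n * (y * b) * y ^ n := by group
        _ = d ^ n * (d * b * y) * y ^ n := by rw [h]
        _ = d ^ (n + 1) * (b * y ^ (n + 1)) := by rw [pow_succ, pow_succ' y]; group
  induction n with
  | zero => simp
  | succ n ih =>
    have hc : (n + 1).choose 2 = n.choose 2 + n := by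
      rw [Nat.choose_succ_succ' n 1]; simp [add_comm]
    calc (b * y) ^ (n + 1) = d ^ n.choose 2 * (b ^ n * y ^ n) * (b * y) := by rw [pow_succ, ih]
      _ = d ^ n.choose 2 * b ^ n * (y ^ n * b) * y := by simp only [mul_assoc]
      _ = d ^ n.choose 2 * (b ^ n * d ^ n) * (b * y ^ n) * y := by rw [hyn]; simp only [mul_assoc]
      _ = d ^ n.choose 2 * (d ^ n * b ^ n) * (b * y ^ n) * y := by
          rw [(hb.pow_pow n n).eq]
      _ = _ := by rw [hc, pow_add, pow_succ b, pow_succ y]; simp only [mul_assoc]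

lemma mul_pow_prime_of_central_commutator {G : Type*} [Group G] {p : ℕ} (hp : Odd p)
    {b y d : G} (h : y * b = d * b * y) (hb : Commute d b) (hy : Commute d y)
    (hd : d ^ p = 1) : (b * y) ^ p = b ^ p * y ^ p := by
  rw [mul_pow_of_central_commutator h hb hy]
  obtain ⟨k, rfl⟩ := hp
  have : (2 * k + 1).choose 2 = (2 * k + 1) * k := by
    rw [Nat.choose_two_right, Nat.add_sub_cancel, mul_comm 2 k, ← mul_assoc]
    exact Nat.mul_div_cancel _ (by norm_num)
  rw [this, pow_mul, hd, one_pow, one_mul]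

/-- An automorphism `a ↦ a ^ r` of a cyclic group of order `p ^ n`, `p` odd, whose order divides `p`
satisfies `p ^ n ∣ p * (r - 1)`; this is the lifting-the-exponent lemma. -/
lemma pow_dvd_mul_sub_one {p : ℕ} (hp : p.Prime) (hodd : Odd p) {n : ℕ} (hn : n ≠ 0) {r : ℤ}
    (h : (p : ℤ) ^ n ∣ r ^ p - 1) : (p : ℤ) ∣ r - 1 ∧ (p : ℤ) ^ n ∣ p * (r - 1) := by
  have := Fact.mk hp
  have h1 : (p : ℤ) ∣ r - 1 := by
    have h2 : (p : ℤ) ∣ r ^ p - 1 := (dvd_pow_self _ hn).trans h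
    rw [← ZMod.intCast_zmod_eq_zero_iff_dvd] at h2 ⊢
    push_cast at h2 ⊢
    rwa [ZMod.pow_card] at h2
  refine ⟨h1, ?_⟩
  have hr : ¬ (p : ℤ) ∣ r := by
    intro h3
    have : (p : ℤ) ∣ 1 := by simpa using dvd_sub h3 h1
    have := Int.natCast_dvd_natCast.mp (by simpa using this : (p : ℤ) ∣ ((1 : ℕ) : ℤ))
    exact hp.one_lt.ne' (Nat.dvd_one.mp this)
  have key := Int.emultiplicity_pow_sub_pow hp hodd h1 hr p
  rw [one_pow] at key
  have hP : Prime (p : ℤ) := Nat.prime_iff_prime_int.mp hp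
  rw [pow_dvd_iff_le_emultiplicity] at h ⊢
  rw [emultiplicity_mul hP, add_comm]
  rw [key] at h
  have : emultiplicity (p : ℤ) (p : ℤ) = emultiplicity p p := Int.natCast_emultiplicity p p
  rwa [this]

/-- In a nilpotent group, a normal `p`-subgroup `P` not contained in `S` has an element outside `S`
that is central and of order `p` modulo `S`. It is found in the lowest term of the upper central
series that meets `P` outside `S`. -/
lemma exists_central_mod {X : Type*} [Group X] (hX : Group.IsNilpotent X) {p : ℕ}
    (P S : Subgroup X) [P.Normal] (hP : IsPGroup p P) (hPS : ¬ P ≤ S) :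
    ∃ y ∈ P, y ∉ S ∧ y ^ p ∈ S ∧ ∀ g : X, ∃ s ∈ S, g * y * g⁻¹ = s * y := by
  classical
  have hex : ∃ i, ∃ y ∈ P, y ∉ S ∧ y ∈ Subgroup.upperCentralSeries X i := by
    obtain ⟨y, hy, hyS⟩ := Set.not_subset.mp hPS
    obtain ⟨i, hi⟩ := hX.nilpotent
    exact ⟨i, y, hy, hyS, by rw [hi]; trivial⟩
  obtain ⟨y, hyP, hyS, hyi⟩ := Nat.find_spec hex
  have hmin := fun m => @Nat.find_min _ _ hex m
  generalize Nat.find hex = i at hyi hmin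
  cases i with
  | zero => rw [Subgroup.upperCentralSeries_zero, Subgroup.mem_bot] at hyi
            exact absurd (hyi ▸ S.one_mem) hyS
  | succ i =>
    have hex2 : ∃ k, y ^ p ^ k ∈ S := by
      obtain ⟨k, hk⟩ := hP ⟨y, hyP⟩
      refine ⟨k, ?_⟩
      have : y ^ p ^ k = 1 := by simpa using congrArg Subtype.val hk
      rw [this]; exact S.one_mem
    have hs := Nat.find_spec hex2
    have hm2 := fun m => @Nat.find_min _ _ hex2 m
    generalize Nat.find hex2 = k at hs hm2
    cases k with
    | zero => simp at hs; exact absurd hs hyS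
    | succ k =>
      refine ⟨y ^ p ^ k, P.pow_mem hyP _, hm2 k (Nat.lt_succ_self k), ?_, ?_⟩
      · rw [← pow_mul, ← pow_succ]; exact hs
      · intro g
        refine ⟨g * y ^ p ^ k * g⁻¹ * (y ^ p ^ k)⁻¹, ?_, by group⟩
        have h1 : y ^ p ^ k ∈ Subgroup.upperCentralSeries X (i + 1) := pow_mem hyi _
        have h2 := Subgroup.mem_upperCentralSeries_succ_iff.mp h1 g
        have h3 : g * y ^ p ^ k * g⁻¹ * (y ^ p ^ k)⁻¹ ∈ Subgroup.upperCentralSeries X i := by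
          have := inv_mem h2
          rwa [commutatorElement_inv, commutatorElement_def] at this
        by_contra hcon
        refine hmin i (Nat.lt_succ_self i) ⟨_, ?_, hcon, h3⟩
        have hz := P.pow_mem hyP (p ^ k)
        exact P.mul_mem (‹P.Normal›.conj_mem _ hz g) (P.inv_mem hz)

/-- A normal `p`-subgroup `P`, `p` odd, of a nilpotent group `X` is cyclic unless `X` has a normal
elementary abelian subgroup of rank two inside `P`. If `⟨a⟩` is a largest cyclic normal subgroup
inside `P` and `y ∈ P` is central of order `p` modulo `⟨a⟩`, then some `x ∈ ⟨a⟩ y` has order `p`, and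
`x` together with the elements of order `p` in `⟨a⟩` generates such a subgroup. -/
lemma eq_zpowers_of_normal_rank_one {X : Type*} [Group X] [Finite X] (hX : Group.IsNilpotent X)
    {p : ℕ} (hp : p.Prime) (hodd : Odd p) (P : Subgroup X) [P.Normal] (hP : IsPGroup p P)
    (H : ∀ x ∈ P, ∀ z ∈ P, x ^ p = 1 → z ^ p = 1 → z ≠ 1 → Commute x z →
      (Subgroup.closure {x, z}).Normal → x ∈ Subgroup.zpowers z) :
    ∃ a, P = Subgroup.zpowers a := by
  have := Fact.mk hp
  -- `a` generates a cyclic normal subgroup of `X` inside `P` of the largest possible order.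
  obtain ⟨a, ⟨haP, haN⟩, hmax⟩ :=
    Set.exists_max_image {a : X | a ∈ P ∧ (Subgroup.zpowers a).Normal} orderOf (Set.toFinite _)
      ⟨1, P.one_mem, by rw [Subgroup.zpowers_one_eq_bot]; infer_instance⟩
  refine ⟨a, le_antisymm ?_ (by simpa using haP)⟩
  by_contra hPS
  obtain ⟨y, hyP, hyS, hypS, hcom⟩ := exists_central_mod hX P _ hP hPS
  -- Otherwise `⟨y⟩` would be a larger cyclic normal subgroup.
  have hay : a ∉ Subgroup.zpowers y := by
    intro hay
    have hle : Subgroup.zpowers a ≤ Subgroup.zpowers y := by simpa using hay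
    have hyN : (Subgroup.zpowers y).Normal := by
      constructor
      intro t ht g
      obtain ⟨k, rfl⟩ := Subgroup.mem_zpowers_iff.mp ht
      obtain ⟨s, hs, he⟩ := hcom g
      rw [← conj_zpow, he]
      exact zpow_mem (mul_mem (hle hs) (Subgroup.mem_zpowers y)) _
    have h1 := hmax y ⟨hyP, hyN⟩
    rw [← Nat.card_zpowers, ← Nat.card_zpowers] at h1
    have h2 := Subgroup.eq_of_le_of_card_ge hle h1
    exact hyS (h2 ▸ Subgroup.mem_zpowers y)
  obtain ⟨n, hn⟩ : ∃ n, orderOf a = p ^ n := by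
    obtain ⟨n, hn⟩ := (IsPGroup.iff_orderOf.mp hP) ⟨a, haP⟩
    exact ⟨n, by rwa [Subgroup.orderOf_mk] at hn⟩
  have hone : ∀ k : ℤ, a ^ k = 1 ↔ (p : ℤ) ^ n ∣ k := by
    intro k
    rw [← orderOf_dvd_iff_zpow_eq_one, hn]; push_cast; rfl
  have hn0 : n ≠ 0 := by
    rintro rfl
    have : a = 1 := by simpa using hn
    exact hay (this ▸ one_mem _)
  have heq : ∀ i j : ℤ, (p : ℤ) ^ n ∣ i - j → a ^ i = a ^ j := by
    intro i j h
    rw [← mul_inv_eq_one, ← zpow_sub, hone]; exact h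
  obtain ⟨r, hr⟩ := Subgroup.mem_zpowers_iff.mp (haN.conj_mem a (Subgroup.mem_zpowers a) y)
  have hconj : ∀ j : ℤ, y * a ^ j = a ^ (r * j) * y := by
    intro j
    rw [zpow_mul, hr, conj_zpow]; group
  have hconj' : ∀ k : ℕ, y ^ k * a = a ^ (r ^ k) * y ^ k := by
    intro k
    induction k with
    | zero => simp
    | succ k ih =>
      rw [pow_succ', mul_assoc, ih, ← mul_assoc, hconj, mul_assoc, pow_succ' r]
  obtain ⟨j, hj⟩ := Subgroup.mem_zpowers_iff.mp hypS
  have hrp : (p : ℤ) ^ n ∣ r ^ p - 1 := by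
    have h1 := hconj' p
    rw [← hj, ← zpow_add_one, ← zpow_add] at h1
    rw [← hone, zpow_sub, zpow_one, mul_inv_eq_one]
    rw [zpow_add_one, add_comm, zpow_add] at h1
    exact (mul_left_cancel h1).symm
  obtain ⟨hr1, hr2⟩ := pow_dvd_mul_sub_one hp hodd hn0 hrp
  have hr3 : (p : ℤ) ^ n ∣ (r - 1) * (r - 1) := hr2.trans (mul_dvd_mul_right hr1 _)
  -- Elements inducing `a ↦ a ^ r` satisfy the `p`-th power rule with respect to `⟨a⟩`.
  have hpow : ∀ x : X, (∀ j : ℤ, x * a ^ j = a ^ (r * j) * x) →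
      ∀ i : ℤ, (a ^ i * x) ^ p = (a ^ i) ^ p * x ^ p := by
    intro x hx i
    refine mul_pow_prime_of_central_commutator (d := a ^ ((r - 1) * i)) hodd ?_ ?_ ?_ ?_
    · rw [hx, ← zpow_add]; congr 2; ring
    · exact (Commute.refl a).zpow_zpow _ _
    · refine ((hx _).trans ?_).symm
      congr 1
      apply heq
      have : r * ((r - 1) * i) - (r - 1) * i = (r - 1) * (r - 1) * i := by ring
      rw [this]; exact hr3.mul_right i
    · rw [← zpow_natCast, ← zpow_mul, hone]
      have : (r - 1) * i * p = p * (r - 1) * i := by ring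
      rw [this]; exact hr2.mul_right i
  -- Here `y ^ p = a ^ j`; if `p ∤ j`, then `a` would be a power of `y`.
  have hpj : (p : ℤ) ∣ j := by
    by_contra hpj
    apply hay
    have hcop : IsCoprime j ((p : ℤ) ^ n) :=
      (((Nat.prime_iff_prime_int.mp hp).coprime_iff_not_dvd.mpr hpj).symm).pow_right
    obtain ⟨u, v, huv⟩ := hcop
    have : a = (y ^ p) ^ u := by
      rw [← hj, ← zpow_mul]
      conv_lhs => rw [← zpow_one a]
      apply heq
      exact ⟨v, by linear_combination (-1 : ℤ) * huv⟩
    rw [this]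
    exact zpow_mem (pow_mem (Subgroup.mem_zpowers y) _) _
  obtain ⟨k, rfl⟩ := hpj
  -- The element `a ^ (-k) * y`, where `y ^ p = a ^ (p * k)`, has order `p` and is not in `⟨a⟩`.
  have hxconj : ∀ j : ℤ, (a ^ (-k) * y) * a ^ j = a ^ (r * j) * (a ^ (-k) * y) := by
    intro j
    rw [mul_assoc, hconj, ← mul_assoc, ← mul_assoc, ((Commute.refl a).zpow_zpow _ _).eq]
  have hxp : (a ^ (-k) * y) ^ p = 1 := by
    rw [hpow y hconj, ← hj, ← zpow_natCast, ← zpow_mul, ← zpow_add, hone]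
    simp [mul_comm]
  have hxP : a ^ (-k) * y ∈ P := mul_mem (zpow_mem haP _) hyP
  have hxS : a ^ (-k) * y ∉ Subgroup.zpowers a := by
    intro h
    exact hyS ((Subgroup.mul_mem_cancel_left _ (zpow_mem (Subgroup.mem_zpowers a) _)).mp h)
  have hxcom : ∀ g : X, ∃ s ∈ Subgroup.zpowers a,
      g * (a ^ (-k) * y) * g⁻¹ = s * (a ^ (-k) * y) := by
    intro g
    obtain ⟨s, hs, he⟩ := hcom g
    refine ⟨g * a ^ (-k) * g⁻¹ * s * (a ^ (-k))⁻¹, ?_, ?_⟩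
    · have h0 := zpow_mem (Subgroup.mem_zpowers a) (-k)
      exact mul_mem (mul_mem (haN.conj_mem _ h0 g) hs) (inv_mem h0)
    · calc g * (a ^ (-k) * y) * g⁻¹ = g * a ^ (-k) * g⁻¹ * (g * y * g⁻¹) := by group
        _ = _ := by rw [he]; group
  generalize a ^ (-k) * y = x at hxconj hxp hxP hxS hxcom
  obtain ⟨m, rfl⟩ := Nat.exists_eq_succ_of_ne_zero hn0
  -- The element `a ^ p ^ m` generates the subgroup of order `p` of `⟨a⟩`.
  have hzS : ∀ s ∈ Subgroup.zpowers a, s ^ p = 1 → s ∈ Subgroup.zpowers (a ^ p ^ m) := by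
    intro s hs hsp
    obtain ⟨i, rfl⟩ := Subgroup.mem_zpowers_iff.mp hs
    rw [← zpow_natCast, ← zpow_mul, hone, Nat.succ_eq_add_one, pow_succ] at hsp
    obtain ⟨t, rfl⟩ := Int.dvd_of_mul_dvd_mul_right (by exact_mod_cast hp.ne_zero) hsp
    rw [zpow_mul]
    refine zpow_mem ?_ t
    have : a ^ ((p : ℤ) ^ m) = a ^ p ^ m := by exact_mod_cast zpow_natCast a (p ^ m)
    rw [this]; exact Subgroup.mem_zpowers _
  have hzp : (a ^ p ^ m) ^ p = 1 := by
    rw [← pow_mul, ← pow_succ, ← Nat.succ_eq_add_one, ← hn, pow_orderOf_eq_one]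
  have hz1 : a ^ p ^ m ≠ 1 := by
    intro h
    have := orderOf_dvd_of_pow_eq_one h
    rw [hn] at this
    exact absurd (Nat.le_of_dvd (pow_pos hp.pos _) this)
      (not_le.mpr (Nat.pow_lt_pow_right hp.one_lt (Nat.lt_succ_self m)))
  have hzmem : a ^ p ^ m ∈ Subgroup.zpowers a := pow_mem (Subgroup.mem_zpowers a) _
  have hxz : Commute x (a ^ p ^ m) := by
    have h1 := hxconj ((p : ℤ) ^ m)
    have h2 : a ^ (r * (p : ℤ) ^ m) = a ^ ((p : ℤ) ^ m) := by
      apply heq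
      have : r * (p : ℤ) ^ m - (p : ℤ) ^ m = (r - 1) * (p : ℤ) ^ m := by ring
      rw [this, Nat.succ_eq_add_one, pow_succ']
      exact mul_dvd_mul_right hr1 _
    rw [h2] at h1
    have h3 : a ^ ((p : ℤ) ^ m) = a ^ p ^ m := by exact_mod_cast zpow_natCast a (p ^ m)
    rw [h3] at h1
    exact h1
  refine hxS ((Subgroup.zpowers_le.mpr hzmem)
    (H x hxP _ (pow_mem haP _) hxp hzp hz1 hxz ?_))
  have hxE : x ∈ Subgroup.closure {x, a ^ p ^ m} := Subgroup.subset_closure (by simp)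
  have hzE : Subgroup.zpowers (a ^ p ^ m) ≤ Subgroup.closure {x, a ^ p ^ m} := by
    rw [Subgroup.zpowers_le]; exact Subgroup.subset_closure (by simp)
  constructor
  intro t ht g
  suffices h : Subgroup.closure {x, a ^ p ^ m} ≤
      (Subgroup.closure {x, a ^ p ^ m}).comap (MulAut.conj g).toMonoidHom from h ht
  rw [Subgroup.closure_le]
  rintro u (rfl | rfl)
  · obtain ⟨s, hs, he⟩ := hxcom g
    have hs1 : s ^ p = 1 := by
      obtain ⟨i, rfl⟩ := Subgroup.mem_zpowers_iff.mp hs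
      have h1 := hpow u hxconj i
      rwa [← he, conj_pow, hxp, mul_one, mul_inv_cancel, mul_one, eq_comm] at h1
    change g * u * g⁻¹ ∈ Subgroup.closure {u, a ^ p ^ m}
    rw [he]
    exact mul_mem (hzE (hzS s hs hs1)) hxE
  · change g * a ^ p ^ m * g⁻¹ ∈ Subgroup.closure {x, a ^ p ^ m}
    refine hzE (hzS _ (haN.conj_mem _ hzmem g) ?_)
    rw [conj_pow, hzp]; group

/-! ### Averaging operators -/

variable {X V : Type*} [Group X] [AddCommGroup V]

lemma exists_intCast_mul_eq_one [Finite V] {c : ℕ} (h : c.Coprime (Nat.card V)) :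
    ∃ m : ℤ, (m : AddMonoid.End V) * (c : AddMonoid.End V) = 1 := by
  obtain ⟨u, v, huv⟩ := Nat.isCoprime_iff_coprime.mpr h
  refine ⟨u, ?_⟩
  have h0 : ((Nat.card V : ℕ) : AddMonoid.End V) = 0 := by
    ext w
    rw [AddMonoid.End.natCast_apply, card_nsmul_eq_zero']
    rfl
  have h1 := congrArg (Int.cast : ℤ → AddMonoid.End V) huv
  push_cast at h1
  rwa [h0, mul_zero, add_zero] at h1

lemma map_inv_mul_cancel_left (φ : X →* AddMonoid.End V) (g : X) (T : AddMonoid.End V) :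
    φ g⁻¹ * (φ g * T) = T := by
  rw [← mul_assoc, ← map_mul, inv_mul_cancel, map_one, one_mul]

lemma map_mul_inv_cancel_left (φ : X →* AddMonoid.End V) (g : X) (T : AddMonoid.End V) :
    φ g * (φ g⁻¹ * T) = T := by
  rw [← mul_assoc, ← map_mul, mul_inv_cancel, map_one, one_mul]

/-- The averaging operator over a subgroup `K` of order coprime to `|V|`: a projection onto the
fixed points of `K` commuting with everything that commutes with `K`. -/
lemma exists_average [Finite X] [Finite V] (φ : X →* AddMonoid.End V) (K : Subgroup X)
    (hK : (Nat.card K).Coprime (Nat.card V)) :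
    ∃ e : AddMonoid.End V, (∀ k ∈ K, φ k * e = e) ∧
      (∀ v, (∀ k ∈ K, φ k v = v) → e v = v) ∧
      (∀ T, (∀ k ∈ K, Commute T (φ k)) → Commute T e) := by
  classical
  have := Fintype.ofFinite X
  obtain ⟨m, hm⟩ := exists_intCast_mul_eq_one (V := V) hK
  refine ⟨(m : AddMonoid.End V) * ∑ k : K, φ k, ?_, ?_, ?_⟩
  · intro k hk
    rw [← mul_assoc, ← (Int.cast_commute m (φ k)).eq, mul_assoc, Finset.mul_sum]
    congr 1
    exact Fintype.sum_equiv (Equiv.mulLeft (⟨k, hk⟩ : K)) _ _ (fun i => by simp)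
  · intro v hv
    have h1 : (∑ k : K, φ k) v = ((Nat.card K : ℕ) : AddMonoid.End V) v := by
      have h2 : (∑ k : K, φ k) v = ∑ k : K, φ k v :=
        map_sum (AddMonoidHom.eval v) (fun k : K => φ k) Finset.univ
      rw [h2, Finset.sum_congr rfl (fun (k : K) _ => hv k k.2)]
      simp
    change (m : AddMonoid.End V) ((∑ k : K, φ k) v) = v
    rw [h1]
    exact congrArg (fun T : AddMonoid.End V => T v) hm
  · intro T hT
    exact (Int.cast_commute m T).symm.mul_right (Commute.sum_right _ _ _ (fun k _ => hT k k.2))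

/-- Let `e` be an idempotent commuting with `L` whose conjugates by elements outside `L` are
orthogonal to it. For `L ≤ M`, the sum `f` of the distinct `M`-conjugates of `e` is an idempotent
commuting with `M`, it dominates `e`, and its conjugates by elements outside `M` are orthogonal to
it. It is written as the sum over all of `M`, divided by `|L|`. -/
lemma exists_orbit_sum [Finite X] [Finite V] (φ : X →* AddMonoid.End V) (L M : Subgroup X)
    (hLM : L ≤ M) (hL : (Nat.card L).Coprime (Nat.card V)) (e : AddMonoid.End V)
    (hee : e * e = e) (heL : ∀ t ∈ L, Commute (φ t) e) (he : ∀ t ∉ L, e * (φ t * e) = 0) :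
    ∃ f : AddMonoid.End V, (∀ m ∈ M, Commute (φ m) f) ∧ f * e = e ∧ f * f = f ∧
      (∀ t ∉ M, f * (φ t * f) = 0) ∧
      (∀ T : AddMonoid.End V, (∀ m ∈ M, T * (φ m * e) = φ m * e) → T * f = f) := by
  classical
  have := Fintype.ofFinite X
  obtain ⟨c, hc⟩ := exists_intCast_mul_eq_one (V := V) hL
  have hTf : ∀ T : AddMonoid.End V, T * ((c : AddMonoid.End V) * ∑ m : M, φ m * (e * φ (m : X)⁻¹))
      = (c : AddMonoid.End V) * ∑ m : M, T * (φ m * e) * φ (m : X)⁻¹ := by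
    intro T
    rw [← mul_assoc, ← (Int.cast_commute c T).eq, mul_assoc, Finset.mul_sum]
    simp only [mul_assoc]
  have hfT : ∀ T : AddMonoid.End V, ((c : AddMonoid.End V) * ∑ m : M, φ m * (e * φ (m : X)⁻¹)) * T
      = (c : AddMonoid.End V) * ∑ m : M, φ m * (e * (φ (m : X)⁻¹ * T)) := by
    intro T
    rw [mul_assoc, Finset.sum_mul]
    simp only [mul_assoc]
  set f : AddMonoid.End V := (c : AddMonoid.End V) * ∑ m : M, φ m * (e * φ (m : X)⁻¹) with hf
  have h1 : ∀ m ∈ M, Commute (φ m) f := by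
    intro m hm
    change φ m * f = f * φ m
    rw [hTf, hfT]
    congr 1
    refine Fintype.sum_equiv (Equiv.mulLeft (⟨m, hm⟩ : M)) _ _ (fun i => ?_)
    simp only [Equiv.coe_mulLeft, Subgroup.coe_mul, mul_inv_rev, map_mul, mul_assoc]
    rw [← map_mul φ m⁻¹ m]; simp
  have h2 : f * e = e := by
    rw [hfT]
    have : ∀ m : M, φ m * (e * (φ (m : X)⁻¹ * e)) = if (m : X) ∈ L then e else 0 := by
      intro m
      split_ifs with hm
      · rw [(heL _ (inv_mem hm)).eq, ← mul_assoc e, hee, ← (heL _ (inv_mem hm)).eq,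
          map_mul_inv_cancel_left]
      · rw [he _ (fun h => hm (by simpa using inv_mem h)), mul_zero]
    rw [Finset.sum_congr rfl (fun m _ => this m), Finset.sum_ite, Finset.sum_const_zero, add_zero,
      Finset.sum_const]
    have hcard : (Finset.univ.filter (fun m : M => (m : X) ∈ L)).card = Nat.card L := by
      rw [← Nat.card_congr (Subgroup.subgroupOfEquivOfLe hLM).toEquiv, Nat.card_eq_fintype_card,
        Fintype.card_subtype]
      rfl
    rw [hcard, nsmul_eq_mul, ← mul_assoc, hc, one_mul]
  refine ⟨f, h1, h2, ?_, ?_, ?_⟩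
  · rw [hTf]
    conv_rhs => rw [hf]
    congr 1
    refine Finset.sum_congr rfl (fun m _ => ?_)
    rw [← mul_assoc f, ← (h1 m m.2).eq, mul_assoc (φ m), h2, mul_assoc]
  · intro t ht
    have h3 : ∀ s ∉ M, f * (φ s * e) = 0 := by
      intro s hs
      rw [hfT, Finset.sum_eq_zero, mul_zero]
      intro m _
      rw [← mul_assoc (φ (m : X)⁻¹), ← map_mul, he, mul_zero]
      exact fun h => hs ((M.mul_mem_cancel_left (inv_mem m.2)).mp (hLM h))
    rw [hTf, Finset.mul_sum, Finset.mul_sum]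
    apply Finset.sum_eq_zero
    intro m _
    have h4 : f * (φ t * (φ m * e)) = 0 := by
      rw [← mul_assoc (φ t), ← map_mul]
      exact h3 _ (fun h => ht ((M.mul_mem_cancel_right m.2).mp h))
    rw [← mul_assoc f, (Int.cast_commute c f).symm.eq, mul_assoc, ← mul_assoc f, h4, zero_mul,
      mul_zero]
  · intro T hT
    rw [hTf]
    conv_rhs => rw [hf]
    congr 1
    refine Finset.sum_congr rfl (fun m _ => ?_)
    rw [hT m m.2, mul_assoc]

/-! ### Decompositions and systems of imprimitivity -/

/-- The action `φ` has a vector whose stabilizer is as small as possible, namely the kernel of `φ`. -/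
def HasRegular (φ : X →* AddMonoid.End V) : Prop :=
  ∃ v : V, ∀ x : X, φ x v = v → φ x = 1

/-- The induction hypothesis for `φ`: every subgroup `M` of `X` has a vector with minimal stabilizer
on every proper `M`-invariant direct summand of `V`. The summand is given as the image of an
idempotent `f` commuting with `M`; that `m` acts trivially on it reads `φ m * f = f`. -/
def SmallerRegular (φ : X →* AddMonoid.End V) : Prop :=
  ∀ (M : Subgroup X) (f : AddMonoid.End V), (∀ m ∈ M, Commute (φ m) f) → f * f = f → f ≠ 1 →
    ∃ w, f w = w ∧ ∀ m ∈ M, φ m w = w → φ m * f = f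

/-- A nontrivial `X`-invariant decomposition `V = f V ⊕ (1 - f) V` yields a regular vector. -/
lemma SmallerRegular.of_decomposition {φ : X →* AddMonoid.End V} (hφ : SmallerRegular φ)
    {f : AddMonoid.End V} (hf : ∀ x, Commute (φ x) f) (hff : f * f = f) (h0 : f ≠ 0)
    (h1 : f ≠ 1) : HasRegular φ := by
  obtain ⟨u, hu, hu'⟩ := hφ ⊤ f (fun m _ => hf m) hff h1
  have hgg : (1 - f) * (1 - f) = 1 - f := by
    rw [mul_sub, mul_one, sub_mul, one_mul, hff, sub_self, sub_zero]
  obtain ⟨w, hw, hw'⟩ := hφ ⊤ (1 - f) (fun m _ => (Commute.one_right _).sub_right (hf m)) hgg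
    (fun h => h0 (by simpa using h))
  have hfw : f w = 0 := by
    have : w - f w = w := hw
    simpa using this
  refine ⟨u + w, fun x hx => ?_⟩
  have hxf : ∀ v, φ x (f v) = f (φ x v) := fun v =>
    congrArg (fun T : AddMonoid.End V => T v) (hf x).eq
  have hxu : φ x u = u := by
    have h2 := congrArg f hx
    rw [← hxf, map_add, hfw, hu, add_zero] at h2
    exact h2
  have hxw : φ x w = w := by
    rw [map_add, hxu] at hx
    exact add_left_cancel hx
  have h3 := hu' x trivial hxu
  have h4 := hw' x trivial hxw
  rw [mul_sub, h3, mul_one] at h4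
  exact sub_left_injective h4

/-- If the translates of `f V` are permuted regularly by `X ⧸ M`, are independent, and generate `V` to
the extent that only the kernel of `φ` acts trivially on all of them, then `φ` has a regular vector:
with `w` regular for `M` on `f V`, it is the sum of one translate of `w` for each coset of `M`, the
trivial coset being given the sign `-1`. -/
lemma SmallerRegular.of_system [Finite X] [Finite V] {φ : X →* AddMonoid.End V}
    (hφ : SmallerRegular φ) (hX : Odd (Nat.card X)) (hV : Odd (Nat.card V))
    (M : Subgroup X) [M.Normal] (hM : M ≠ ⊤) {f : AddMonoid.End V}
    (hf : ∀ m ∈ M, Commute (φ m) f) (hff : f * f = f) (h0 : f ≠ 0)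
    (hft : ∀ t ∉ M, f * (φ t * f) = 0)
    (hgen : ∀ x, (∀ g, φ x * (φ g * f) = φ g * f) → φ x = 1) : HasRegular φ := by
  classical
  have := Fintype.ofFinite (X ⧸ M)
  have happ : ∀ (a b : X) (v : V), φ (a * b) v = φ a (φ b v) := fun a b v => by
    rw [map_mul]; rfl
  have hinv : ∀ (a : X) (v : V), φ a⁻¹ (φ a v) = v := fun a v => by
    rw [← happ]; simp
  obtain ⟨s, hs⟩ : ∃ s, s ∉ M := by
    by_contra! h
    exact hM (eq_top_iff.mpr fun x _ => h x)
  have h1 : f ≠ 1 := by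
    rintro rfl
    have h2 := hft s hs
    rw [one_mul, mul_one] at h2
    apply h0
    rw [← map_inv_mul_cancel_left φ s 1, mul_one, h2, mul_zero]
  -- A regular vector of `M` on `f V`, which can be taken to be nonzero.
  obtain ⟨w, hw0, hw, hw'⟩ : ∃ w, w ≠ 0 ∧ f w = w ∧ ∀ m ∈ M, φ m w = w → φ m * f = f := by
    obtain ⟨w, hw, hw'⟩ := hφ M f hf hff h1
    by_cases hw0 : w = 0
    · obtain ⟨u, hu⟩ : ∃ u, f u ≠ 0 := by
        by_contra! h
        exact h0 (AddMonoidHom.ext h)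
      refine ⟨f u, hu, congrArg (fun T : AddMonoid.End V => T u) hff, fun m hm _ => hw' m hm ?_⟩
      rw [hw0, map_zero]
    · exact ⟨w, hw0, hw, hw'⟩
  have hfm : ∀ m ∈ M, f (φ m w) = φ m w := fun m hm => by
    have := congrArg (fun T : AddMonoid.End V => T w) (hf m hm).eq
    change φ m (f w) = f (φ m w) at this
    rw [← this, hw]
  have hft' : ∀ t ∉ M, f (φ t w) = 0 := fun t ht => by
    have := congrArg (fun T : AddMonoid.End V => T w) (hft t ht)
    change f (φ t (f w)) = 0 at this
    rwa [hw] at this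
  -- Odd order prevents `M` from inverting `w`.
  have hneg : ∀ m ∈ M, φ m w ≠ -w := by
    intro m hm hmw
    have h2 : φ (m ^ 2) w = w := by
      rw [pow_two, happ, hmw, map_neg, hmw, neg_neg]
    have h4 : φ m w = w := by
      obtain ⟨k, hk⟩ := hX
      have h5 : ∀ k : ℕ, φ ((m ^ 2) ^ k) w = w := by
        intro k
        induction k with
        | zero => simp
        | succ k ih => rw [pow_succ, happ, h2, ih]
      have h6 : (m ^ 2) ^ (k + 1) = m := by
        rw [← pow_mul, show 2 * (k + 1) = (2 * k + 1) + 1 by ring, ← hk, pow_succ, pow_card_eq_one',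
          one_mul]
      have := h5 (k + 1)
      rwa [h6] at this
    rw [h4] at hmw
    have h7 : (2 : ℕ) • w = 0 := by
      rw [two_nsmul]; nth_rewrite 2 [hmw]; simp
    have h8 : Nat.card V • w = 0 := card_nsmul_eq_zero'
    obtain ⟨k, hk⟩ := hV
    rw [hk, add_nsmul, mul_comm, mul_nsmul', h7, nsmul_zero, zero_add, one_nsmul] at h8
    exact hw0 h8
  -- Negating the translate at the trivial coset, and no other, breaks the symmetry under `X ⧸ M`.
  let ε : X ⧸ M → V → V := fun q u => if q = ((1 : X) : X ⧸ M) then -u else u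
  refine ⟨∑ q : X ⧸ M, ε q (φ q.out w), fun x hx => ?_⟩
  have hcomp : ∀ g : X, f (φ g⁻¹ (∑ q : X ⧸ M, ε q (φ q.out w))) =
      ε g (φ (g⁻¹ * (g : X ⧸ M).out) w) := by
    intro g
    have hmap : ∀ q, f (φ g⁻¹ (ε q (φ q.out w))) = ε q (f (φ (g⁻¹ * q.out) w)) := by
      intro q
      simp only [ε]
      split_ifs <;> simp
    rw [map_sum, map_sum, Finset.sum_eq_single (g : X ⧸ M)]
    · rw [hmap, hfm]
      rw [← QuotientGroup.eq, QuotientGroup.out_eq']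
    · intro q _ hq
      rw [hmap, hft']
      · simp [ε]
      · intro h
        rw [← QuotientGroup.eq, QuotientGroup.out_eq'] at h
        exact hq h.symm
    · simp
  have hx' : φ x⁻¹ (∑ q : X ⧸ M, ε q (φ q.out w)) = ∑ q : X ⧸ M, ε q (φ q.out w) := by
    conv_lhs => rw [← hx]
    exact hinv _ _
  have hkey : ∀ g : X, ε g (φ (g⁻¹ * (g : X ⧸ M).out) w) =
      ε ((x * g : X) : X ⧸ M) (φ ((x * g)⁻¹ * ((x * g : X) : X ⧸ M).out) w) := by
    intro g
    rw [← hcomp, ← hcomp, mul_inv_rev, happ, hx']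
  by_cases hxM : x ∈ M
  · apply hgen
    intro g
    have hq : ((x * g : X) : X ⧸ M) = (g : X ⧸ M) := by
      rw [eq_comm, QuotientGroup.eq, ← mul_assoc]
      simpa using ‹M.Normal›.conj_mem x hxM g⁻¹
    have h2 := hkey g
    rw [hq] at h2
    have h3 : φ (g⁻¹ * (g : X ⧸ M).out) w = φ ((x * g)⁻¹ * (g : X ⧸ M).out) w := by
      simp only [ε] at h2
      split_ifs at h2
      · exact neg_injective h2
      · exact h2
    have hgo : g⁻¹ * (g : X ⧸ M).out ∈ M := by
      rw [← QuotientGroup.eq, QuotientGroup.out_eq']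
    generalize (g : X ⧸ M).out = o at h3 hgo
    have h4 : φ (o⁻¹ * x * o) w = w := by
      have h5 := congrArg (φ (o⁻¹ * x * g)) h3
      rw [← happ, ← happ] at h5
      rw [show o⁻¹ * x * g * (g⁻¹ * o) = o⁻¹ * x * o by group,
        show o⁻¹ * x * g * ((x * g)⁻¹ * o) = 1 by group, map_one] at h5
      exact h5
    have h5 := hw' _ (by simpa using ‹M.Normal›.conj_mem x hxM o⁻¹) h4
    have h6 : φ g * f = φ o * (f * φ (g⁻¹ * o)⁻¹) := by
      rw [← (hf _ (inv_mem hgo)).eq, ← mul_assoc, ← map_mul]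
      congr 2; group
    rw [h6, ← mul_assoc, ← map_mul, show x * o = o * (o⁻¹ * x * o) by group, map_mul, mul_assoc,
      ← mul_assoc _ f, h5]
  · exfalso
    have h2 := hkey 1
    have hq : ((x : X) : X ⧸ M) ≠ ((1 : X) : X ⧸ M) := by
      rw [ne_eq, eq_comm, QuotientGroup.eq]; simpa using hxM
    simp only [ε, mul_one, if_true, if_neg hq, inv_one, one_mul] at h2
    have ho : ((1 : X) : X ⧸ M).out ∈ M := by
      have : (1 : X)⁻¹ * ((1 : X) : X ⧸ M).out ∈ M := by
        rw [← QuotientGroup.eq, QuotientGroup.out_eq']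
      simpa using this
    have ho' : x⁻¹ * ((x : X) : X ⧸ M).out ∈ M := by
      rw [← QuotientGroup.eq, QuotientGroup.out_eq']
    refine hneg _ (mul_mem (inv_mem ho) ho') ?_
    rw [happ, ← h2, map_neg, hinv]

/-- If a normal abelian subgroup `N` does not act semiregularly on the nonzero vectors, then a regular
vector comes from a decomposition of `V` or from a system of imprimitivity. -/
lemma SmallerRegular.of_normal_abelian [Finite X] [Finite V] {φ : X →* AddMonoid.End V}
    (hφ : SmallerRegular φ) (hnil : Group.IsNilpotent X)
    (hX : Odd (Nat.card X)) (hV : Odd (Nat.card V)) (hcop : (Nat.card X).Coprime (Nat.card V))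
    (hinj : Function.Injective φ) (N : Subgroup X) [N.Normal]
    (hN : ∀ a ∈ N, ∀ b ∈ N, Commute a b) {n₀ : X} (hn₀ : n₀ ∈ N) (hn₁ : n₀ ≠ 1) {v₀ : V}
    (hv₀ : v₀ ≠ 0) (hnv : φ n₀ v₀ = v₀) : HasRegular φ := by
  have happ : ∀ (a b : X) (v : V), φ (a * b) v = φ a (φ b v) := fun a b v => by
    rw [map_mul]; rfl
  have hinv : ∀ (a : X) (v : V), φ a⁻¹ (φ a v) = v := fun a v => by
    rw [← happ]; simp
  have hinv' : ∀ (a : X) (v : V), φ a (φ a⁻¹ v) = v := fun a v => by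
    rw [← happ]; simp
  let stab : V → Subgroup X := fun v =>
    { carrier := {n | n ∈ N ∧ φ n v = v}
      one_mem' := ⟨N.one_mem, by simp⟩
      mul_mem' := fun ha hb => ⟨N.mul_mem ha.1 hb.1, by rw [happ, hb.2, ha.2]⟩
      inv_mem' := fun {a} ha => ⟨N.inv_mem ha.1, by
        have := hinv a v
        rwa [ha.2] at this⟩ }
  have hstab : ∀ v n, n ∈ stab v ↔ n ∈ N ∧ φ n v = v := fun v n => Iff.rfl
  -- Among the stabilizers in `N` of nonzero vectors, `stab v₁` is a largest one.
  obtain ⟨v₁, hv₁, hmax⟩ := Set.exists_max_image {v : V | v ≠ 0} (fun v => Nat.card (stab v))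
    (Set.toFinite _) ⟨v₀, hv₀⟩
  have hmax' : ∀ v, v ≠ 0 → stab v₁ ≤ stab v → stab v = stab v₁ := fun v hv hle =>
    (Subgroup.eq_of_le_of_card_ge hle (hmax v hv)).symm
  have hK1 : ∃ k ∈ stab v₁, k ≠ 1 := by
    by_contra! h
    have h1 : stab v₁ = ⊥ := (Subgroup.eq_bot_iff_forall _).mpr h
    have h2 : stab v₀ = stab v₁ := hmax' v₀ hv₀ (by rw [h1]; exact bot_le)
    exact hn₁ (h n₀ (h2 ▸ (hstab _ _).mpr ⟨hn₀, hnv⟩))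
  have hcopK : ∀ K : Subgroup X, (Nat.card K).Coprime (Nat.card V) := fun K =>
    hcop.coprime_dvd_left (Subgroup.card_subgroup_dvd_card K)
  obtain ⟨e, he1, he2, he3⟩ := exists_average φ (stab v₁) (hcopK _)
  have hke : ∀ k ∈ stab v₁, ∀ u, φ k (e u) = e u := fun k hk u =>
    congrArg (fun T : AddMonoid.End V => T u) (he1 k hk)
  have hee : e * e = e := AddMonoidHom.ext fun u => he2 (e u) (fun k hk => hke k hk u)
  have hev₁ : e v₁ = v₁ := he2 v₁ (fun k hk => hk.2)
  have heN : ∀ n ∈ N, Commute (φ n) e := fun n hn =>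
    he3 _ (fun k hk => (hN n hn k hk.1).map φ)
  have hconjN : ∀ t : X, ∀ n ∈ N, t⁻¹ * n * t ∈ N := fun t n hn => by
    simpa using ‹N.Normal›.conj_mem n hn t⁻¹
  have hconj : ∀ t : X, Commute e (φ t * (e * φ t⁻¹)) := by
    intro t
    refine (he3 _ (fun k hk => ?_)).symm
    have h1 := (heN _ (hconjN t k hk.1)).eq
    change φ t * (e * φ t⁻¹) * φ k = φ k * (φ t * (e * φ t⁻¹))
    calc φ t * (e * φ t⁻¹) * φ k = φ t * (e * φ (t⁻¹ * k * t)) * φ t⁻¹ := by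
          simp only [mul_assoc, ← map_mul]; simp
      _ = φ k * (φ t * (e * φ t⁻¹)) := by
          rw [← h1, ← mul_assoc (φ t), ← map_mul, show t * (t⁻¹ * k * t) = k * t by group,
            map_mul]
          simp only [mul_assoc]
  -- The subgroup of all `t` for which `φ t` preserves the decomposition given by `e`.
  let L : Subgroup X :=
    { carrier := {t | φ t * e = e * φ t}
      one_mem' := by simp
      mul_mem' := fun {a b} ha hb => by
        simp only [Set.mem_ofPred_eq] at *
        rw [map_mul, mul_assoc, hb, ← mul_assoc, ha, mul_assoc]
      inv_mem' := fun {a} ha => by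
        simp only [Set.mem_ofPred_eq] at *
        calc φ a⁻¹ * e = φ a⁻¹ * (e * φ a) * φ a⁻¹ := by
              rw [mul_assoc, mul_assoc, ← map_mul]; simp
          _ = e * φ a⁻¹ := by rw [← ha, map_inv_mul_cancel_left] }
  have hL : ∀ t, t ∈ L ↔ φ t * e = e * φ t := fun t => Iff.rfl
  -- If `e` and its conjugate by `t` are not orthogonal, a nonzero vector in both images has, by
  -- maximality, both `stab v₁` and its conjugate by `t` as stabilizer, so the two coincide.
  have heL : ∀ t ∉ L, e * (φ t * e) = 0 := by
    intro t ht
    by_contra hne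
    apply ht
    obtain ⟨u, hu⟩ : ∃ u, e (φ t (e u)) ≠ 0 := by
      by_contra! h
      exact hne (AddMonoidHom.ext h)
    have hy1 : stab (e (φ t (e u))) = stab v₁ :=
      hmax' _ hu (fun k hk => ⟨hk.1, hke k hk _⟩)
    have hy2 : φ t⁻¹ (e (φ t (e u))) = e (φ t⁻¹ (e (φ t u))) := by
      have h1 := congrArg (fun T : AddMonoid.End V => φ t⁻¹ (T (φ t u))) (hconj t).eq
      change φ t⁻¹ (e (φ t (e (φ t⁻¹ (φ t u))))) = φ t⁻¹ (φ t (e (φ t⁻¹ (e (φ t u))))) at h1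
      rwa [hinv, hinv] at h1
    have hy3 : stab (φ t⁻¹ (e (φ t (e u)))) = stab v₁ := by
      refine hmax' _ (fun h => hu ?_) (fun k hk => ⟨hk.1, ?_⟩)
      · rw [← hinv' t (e (φ t (e u))), h, map_zero]
      · rw [hy2, hke k hk]
    have hiff : ∀ n ∈ N, n ∈ stab v₁ ↔ t⁻¹ * n * t ∈ stab v₁ := by
      intro n hn
      conv_lhs => rw [← hy1, hstab]
      conv_rhs => rw [← hy3, hstab]
      rw [← happ, show t⁻¹ * n * t * t⁻¹ = t⁻¹ * n by group, happ]
      constructor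
      · rintro ⟨-, h⟩
        exact ⟨hconjN t n hn, by rw [h]⟩
      · rintro ⟨-, h⟩
        refine ⟨hn, ?_⟩
        have := congrArg (φ t) h
        rwa [hinv', hinv'] at this
    have h1 : e * (φ t * (e * φ t⁻¹)) = φ t * (e * φ t⁻¹) := by
      refine AddMonoidHom.ext fun u => he2 _ (fun k hk => ?_)
      change φ k (φ t (e (φ t⁻¹ u))) = φ t (e (φ t⁻¹ u))
      rw [← happ, show k * t = t * (t⁻¹ * k * t) by group, happ,
        hke _ ((hiff k hk.1).mp hk)]
    have h2 : φ t * (e * φ t⁻¹) * e = e := by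
      refine AddMonoidHom.ext fun u => ?_
      change φ t (e (φ t⁻¹ (e u))) = e u
      rw [he2 (φ t⁻¹ (e u)), hinv']
      intro k hk
      have hk' : t * k * t⁻¹ ∈ stab v₁ := by
        rw [hiff _ (‹N.Normal›.conj_mem k hk.1 t)]
        rwa [show t⁻¹ * (t * k * t⁻¹) * t = k by group]
      rw [← happ, show k * t⁻¹ = t⁻¹ * (t * k * t⁻¹) by group, happ, hke _ hk']
    have h3 : φ t * (e * φ t⁻¹) = e := by rw [← h1, (hconj t).eq, h2]
    rw [hL]
    nth_rewrite 2 [← h3]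
    rw [mul_assoc, mul_assoc, ← map_mul]; simp
  by_contra hnot
  have he0 : e ≠ 0 := fun h0 => hv₁ (by rw [← hev₁, h0]; rfl)
  have hLtop : L ≠ ⊤ := by
    intro h
    have hcomm : ∀ x, Commute (φ x) e := fun x => (hL x).mp (h ▸ trivial)
    by_cases h1 : e = 1
    · obtain ⟨k, hk, hk1⟩ := hK1
      have h2 := he1 k hk
      rw [h1, mul_one, ← map_one φ] at h2
      exact hk1 (hinj h2)
    · exact hnot (hφ.of_decomposition hcomm hee he0 h1)
  obtain ⟨M, hM, hLM⟩ := (eq_top_or_exists_le_coatom L).resolve_left hLtop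
  have hMn : M.Normal := by
    have h := (Group.isNilpotent_of_finite_tfae (G := X)).out 0 2
    exact h.mp hnil M hM
  obtain ⟨f, hf1, hf2, hf3, hf4, -⟩ := exists_orbit_sum φ L M hLM (hcopK L) e hee
    (fun t ht => (hL t).mp ht) heL
  obtain ⟨F, hF1, hF2, hF3, -, hF5⟩ := exists_orbit_sum φ L ⊤ le_top (hcopK L) e hee
    (fun t ht => (hL t).mp ht) heL
  have hF : F = 1 := by
    by_contra hF
    refine hnot (hφ.of_decomposition (fun x => hF1 x trivial) hF3 (fun h => he0 ?_) hF)
    rw [← hF2, h, zero_mul]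
  refine hnot (hφ.of_system hX hV M hM.1 hf1 hf3 (fun h => he0 ?_) hf4 (fun x hx => ?_))
  · rw [← hf2, h, zero_mul]
  · rw [← mul_one (φ x), ← hF]
    refine hF5 _ (fun g _ => ?_)
    rw [← hf2, ← mul_assoc (φ g), ← mul_assoc (φ x), hx]

/-! ### Semiregular actions -/

/-- Two commuting elements of order dividing `p` generating a semiregular group are dependent. If
not, the norms of `z ^ i` (`0 < i < p`) and `x * z ^ j` vanish; summing the latter over `j` leaves
only the contribution of the identity, and `p = 0` on `V`. -/
lemma mem_zpowers_of_semiregular [Finite V] [Nontrivial V] (φ : X →* AddMonoid.End V) {p : ℕ}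
    (hp : p.Prime) (hpV : p.Coprime (Nat.card V)) {x z : X} (hx : x ^ p = 1) (hz : z ^ p = 1)
    (hz1 : z ≠ 1) (hxz : Commute x z)
    (hfree : ∀ g ∈ Subgroup.closure {x, z}, g ≠ 1 → ∀ v, φ g v = v → v = 0) :
    x ∈ Subgroup.zpowers z := by
  have := Fact.mk hp
  by_contra hmem
  -- The norm of a fixed-point-free element of order `p` vanishes.
  have hnorm : ∀ g ∈ Subgroup.closure {x, z}, g ≠ 1 → g ^ p = 1 →
      ∑ i ∈ Finset.range p, φ (g ^ i) = 0 := by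
    intro g hg hg1 hgp
    refine AddMonoidHom.ext fun v => hfree g hg hg1 _ ?_
    have h1 : φ g * ∑ i ∈ Finset.range p, φ (g ^ i) = ∑ i ∈ Finset.range p, φ (g ^ i) := by
      rw [Finset.mul_sum]
      simp only [← map_mul, ← pow_succ']
      have h2 := (Finset.sum_range_succ' (fun i => φ (g ^ i)) p).symm.trans
        (Finset.sum_range_succ (fun i => φ (g ^ i)) p)
      rw [hgp, pow_zero] at h2
      exact add_right_cancel h2
    exact congrArg (fun T : AddMonoid.End V => T v) h1
  have hxE : x ∈ Subgroup.closure {x, z} := Subgroup.subset_closure (by simp)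
  have hzE : z ∈ Subgroup.closure {x, z} := Subgroup.subset_closure (by simp)
  have h1 : ∀ j, ∑ i ∈ Finset.range p, φ ((x * z ^ j) ^ i) = 0 := by
    intro j
    refine hnorm _ (mul_mem hxE (pow_mem hzE j)) (fun h => hmem ?_) ?_
    · rw [eq_inv_of_mul_eq_one_left h]
      exact inv_mem (pow_mem (Subgroup.mem_zpowers z) j)
    · rw [(hxz.pow_right j).mul_pow, hx, ← pow_mul, mul_comm, pow_mul, hz, one_pow, one_mul]
  have h2 : ∑ j ∈ Finset.range p, ∑ i ∈ Finset.range p, φ ((x * z ^ j) ^ i) = 0 :=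
    Finset.sum_eq_zero fun j _ => h1 j
  rw [Finset.sum_comm, Finset.sum_eq_single 0] at h2
  · simp only [pow_zero, map_one, Finset.sum_const, Finset.card_range, nsmul_eq_mul, mul_one] at h2
    obtain ⟨m, hm⟩ := exists_intCast_mul_eq_one (V := V) hpV
    rw [h2, mul_zero] at hm
    obtain ⟨v, hv⟩ := exists_ne (0 : V)
    exact hv (congrArg (fun T : AddMonoid.End V => T v) hm).symm
  · intro i hi hi0
    have h3 : ∀ j, φ ((x * z ^ j) ^ i) = φ (x ^ i) * φ ((z ^ i) ^ j) := by
      intro j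
      rw [(hxz.pow_right j).mul_pow, map_mul, ← pow_mul, ← pow_mul, mul_comm i j]
    rw [Finset.sum_congr rfl fun j _ => h3 j, ← Finset.mul_sum, hnorm, mul_zero]
    · exact pow_mem hzE i
    · intro h
      have h4 := orderOf_dvd_of_pow_eq_one h
      rw [orderOf_eq_prime hz hz1] at h4
      exact absurd (Nat.le_of_dvd (Nat.pos_of_ne_zero hi0) h4)
        (not_le.mpr (Finset.mem_range.mp hi))
    · rw [← pow_mul, mul_comm, pow_mul, hz, one_pow]
  · intro h
    exact absurd (Finset.mem_range.mpr hp.pos) h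

/-- If every normal abelian subgroup of `X` acts semiregularly on the nonzero vectors, then the Sylow
subgroups of `X` are cyclic, and `X` itself acts semiregularly. -/
lemma semiregular_of_normal_abelian [Finite X] [Finite V] [Nontrivial V]
    (φ : X →* AddMonoid.End V) (hnil : Group.IsNilpotent X) (hX : Odd (Nat.card X))
    (hcop : (Nat.card X).Coprime (Nat.card V))
    (hfree : ∀ N : Subgroup X, N.Normal → (∀ a ∈ N, ∀ b ∈ N, Commute a b) →
      ∀ g ∈ N, g ≠ 1 → ∀ v, φ g v = v → v = 0) {x : X} (hx : x ≠ 1) {v : V} (hxv : φ x v = v) :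
    v = 0 := by
  -- A power `x ^ k` of `x` has prime order `p`.
  obtain ⟨p, hp, hpx⟩ := Nat.exists_prime_and_dvd (mt orderOf_eq_one_iff.mp hx)
  have := Fact.mk hp
  have hpX : p ∣ Nat.card X := hpx.trans (orderOf_dvd_natCard x)
  have hodd : Odd p := hX.of_dvd_nat hpX
  have hpV : p.Coprime (Nat.card V) := hcop.coprime_dvd_left hpX
  obtain ⟨k, hk⟩ := hpx
  have hord : orderOf (x ^ k) = p := by
    have hk0 : k ≠ 0 := by
      rintro rfl
      exact (orderOf_pos x).ne' (by simpa using hk)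
    rw [orderOf_pow_of_dvd hk0 ⟨p, by rw [hk, mul_comm]⟩, hk,
      Nat.mul_div_cancel _ (Nat.pos_of_ne_zero hk0)]
  have hfix : φ (x ^ k) v = v := by
    clear hk hord
    induction k with
    | zero => simp
    | succ k ih =>
      rw [pow_succ, map_mul]
      change φ (x ^ k) (φ x v) = v
      rw [hxv, ih]
  obtain ⟨P, hP⟩ : ∃ P : Sylow p X, x ^ k ∈ P := by
    have h1 : IsPGroup p (Subgroup.zpowers (x ^ k)) :=
      IsPGroup.of_card (n := 1) (by rw [Nat.card_zpowers, hord, pow_one])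
    obtain ⟨P, hP⟩ := h1.exists_le_sylow
    exact ⟨P, hP (Subgroup.mem_zpowers _)⟩
  have hPn : (P : Subgroup X).Normal :=
    Sylow.normal_of_normalizerCondition Group.normalizerCondition_of_isNilpotent P
  obtain ⟨a, ha⟩ := eq_zpowers_of_normal_rank_one hnil hp hodd (P : Subgroup X) P.isPGroup'
    (fun x _ z _ hx hz hz1 hxz hE => mem_zpowers_of_semiregular φ hp hpV hx hz hz1 hxz
      (hfree _ hE (fun a ha b hb => by
        have hcomm : ∀ s ∈ ({x, z} : Set X), ∀ t ∈ ({x, z} : Set X), s * t = t * s := by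
          rintro s (rfl | rfl) t (rfl | rfl)
          exacts [rfl, hxz.eq, hxz.eq.symm, rfl]
        have h1 : Subgroup.closure {x, z} ≤ Subgroup.centralizer {x, z} := by
          rw [Subgroup.closure_le]
          exact fun s hs => Subgroup.mem_centralizer_iff.mpr fun t ht => hcomm t ht s hs
        have h2 : Subgroup.closure {x, z} ≤
            Subgroup.centralizer (Subgroup.closure {x, z} : Set X) := by
          rw [Subgroup.closure_le]
          exact fun s hs => Subgroup.mem_centralizer_iff.mpr fun t ht =>
            (Subgroup.mem_centralizer_iff.mp (h1 ht) s hs).symm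
        exact Subgroup.mem_centralizer_iff.mp (h2 hb) a ha)))
  refine hfree P hPn (fun s hs t ht => ?_) (x ^ k) hP (fun h => ?_) v hfix
  · rw [ha] at hs ht
    obtain ⟨i, rfl⟩ := Subgroup.mem_zpowers_iff.mp hs
    obtain ⟨j, rfl⟩ := Subgroup.mem_zpowers_iff.mp ht
    exact (Commute.refl a).zpow_zpow i j
  · rw [h, orderOf_one] at hord
    exact hp.one_lt.ne hord

/-! ### The abelian case -/

/-- The existence of regular vectors on all proper subgroups of `V` gives `SmallerRegular`, by
restricting the action of `M` to the image of the idempotent. -/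
lemma smallerRegular_of_restrict [Finite X] [Finite V] (φ : X →* AddMonoid.End V)
    (IH : ∀ (M : Subgroup X) (W : AddSubgroup V) (ψ : M →* AddMonoid.End W),
      W ≠ ⊤ → HasRegular ψ) : SmallerRegular φ := by
  intro M f hf hff hf1
  have hmem : ∀ v, v ∈ AddMonoidHom.range f ↔ f v = v := by
    intro v
    constructor
    · rintro ⟨u, rfl⟩
      exact congrArg (fun T : AddMonoid.End V => T u) hff
    · exact fun h => ⟨v, h⟩
  have hmap : ∀ m : M, ∀ v ∈ AddMonoidHom.range f, φ m v ∈ AddMonoidHom.range f := by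
    intro m v hv
    rw [hmem] at hv ⊢
    have := congrArg (fun T : AddMonoid.End V => T v) (hf m m.2).eq
    change φ m (f v) = f (φ m v) at this
    rw [← this, hv]
  let ψ : M →* AddMonoid.End (AddMonoidHom.range f) :=
    { toFun := fun m =>
        { toFun := fun w => ⟨φ m w, hmap m w w.2⟩
          map_zero' := by ext; simp
          map_add' := fun a b => by ext; simp }
      map_one' := AddMonoidHom.ext fun w => Subtype.ext (by
        change φ ((1 : M) : X) (w : V) = w
        simp)
      map_mul' := fun a b => AddMonoidHom.ext fun w => Subtype.ext (by
        change φ ((a * b : M) : X) (w : V) = φ a (φ b w)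
        rw [Subgroup.coe_mul, map_mul]
        rfl) }
  have hψ : ∀ (m : M) (w : AddMonoidHom.range f), (ψ m w : V) = φ m w := fun _ _ => rfl
  obtain ⟨w, hw⟩ := IH M (AddMonoidHom.range f) ψ (fun h => hf1 (AddMonoidHom.ext fun v =>
    (hmem v).mp (h ▸ AddSubgroup.mem_top v)))
  refine ⟨w, (hmem _).mp w.2, fun m hm hmw => AddMonoidHom.ext fun v => ?_⟩
  have h1 := hw ⟨m, hm⟩ (Subtype.ext hmw)
  exact congrArg (fun T : AddMonoid.End (AddMonoidHom.range f) =>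
    ((T ⟨f v, ⟨v, rfl⟩⟩ : AddMonoidHom.range f) : V)) h1

/-- A nilpotent group of odd order acting on an abelian group of coprime odd order has a vector whose
stabilizer is the kernel of the action. -/
theorem hasRegular_of_isNilpotent (n : ℕ) : ∀ {X : Type u} {V : Type v} [Group X] [AddCommGroup V]
    [Finite X] [Finite V] (φ : X →* AddMonoid.End V), Group.IsNilpotent X → Odd (Nat.card X) →
    Odd (Nat.card V) → (Nat.card X).Coprime (Nat.card V) → Nat.card V = n → HasRegular φ := by
  induction n using Nat.strong_induction_on with
  | _ n ih =>
  intro X V _ _ _ _ φ hnil hX hV hcop hn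
  -- It suffices to treat the faithful action of the quotient by the kernel.
  let Q := X ⧸ φ.ker
  let ρ : Q →* AddMonoid.End V := QuotientGroup.lift φ.ker φ le_rfl
  have hQnil : Group.IsNilpotent Q := inferInstance
  have hdvd : Nat.card Q ∣ Nat.card X := Subgroup.card_quotient_dvd_card _
  have hQ : Odd (Nat.card Q) := hX.of_dvd_nat hdvd
  have hQcop : (Nat.card Q).Coprime (Nat.card V) := hcop.coprime_dvd_left hdvd
  have hinj : Function.Injective ρ := by
    rw [injective_iff_map_eq_one]
    intro q
    induction q using QuotientGroup.induction_on with
    | H x => exact fun h => (QuotientGroup.eq_one_iff x).mpr h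
  suffices h : HasRegular ρ by
    obtain ⟨v, hv⟩ := h
    exact ⟨v, fun x hx => hv (x : Q) hx⟩
  have hsmall : SmallerRegular ρ := by
    refine smallerRegular_of_restrict ρ (fun M W ψ hW => ?_)
    have hWd : Nat.card W ∣ Nat.card V := AddSubgroup.card_addSubgroup_dvd_card W
    refine ih (Nat.card W) ?_ ψ inferInstance
      (hQ.of_dvd_nat (Subgroup.card_subgroup_dvd_card M)) (hV.of_dvd_nat hWd)
      ((hQcop.coprime_dvd_left (Subgroup.card_subgroup_dvd_card M)).coprime_dvd_right hWd) rfl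
    rw [← hn]
    refine lt_of_le_of_ne (Nat.le_of_dvd Nat.card_pos hWd) (fun h => hW ?_)
    exact AddSubgroup.eq_top_of_card_eq W h
  by_contra hnot
  rcases subsingleton_or_nontrivial V with hs | hs
  · exact hnot ⟨0, fun x _ => AddMonoidHom.ext fun v => Subsingleton.elim _ _⟩
  · obtain ⟨v, hv⟩ := exists_ne (0 : V)
    refine hnot ⟨v, fun x hx => ?_⟩
    by_contra hx1
    refine hv (semiregular_of_normal_abelian ρ hQnil hQ hQcop ?_ (x := x) ?_ hx)
    · intro N hN hNc g hg hg1 u hu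
      by_contra hu0
      exact hnot (hsmall.of_normal_abelian hQnil hQ hV hQcop hinj N hNc hg hg1 hu0 hu)
    · rintro rfl
      exact hx1 (map_one ρ)

/-! ### Reduction to the abelianization -/

/-- In a finite nilpotent group the commutator subgroup consists of nongenerators. -/
lemma eq_top_of_sup_commutator {G : Type*} [Group G] [Finite G] (hG : Group.IsNilpotent G)
    {C : Subgroup G} (h : C ⊔ commutator G = ⊤) : C = ⊤ := by
  by_contra hC
  obtain ⟨M, hM, hCM⟩ := (eq_top_or_exists_le_coatom C).resolve_left hC
  have hMn : M.Normal := by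
    have h := (Group.isNilpotent_of_finite_tfae (G := G)).out 0 2
    exact h.mp hG M hM
  have hnt : Nontrivial (G ⧸ M) := QuotientGroup.nontrivial_iff.mpr hM.1
  refine (Group.IsSolvable.commutator_lt_top_of_nontrivial (G ⧸ M)).ne ?_
  have h1 : M ⊔ commutator G = ⊤ := eq_top_iff.mpr (h ▸ sup_le_sup_right hCM _)
  have h2 := congrArg (Subgroup.map (QuotientGroup.mk' M)) h1
  rw [Subgroup.map_sup, QuotientGroup.map_mk'_self, bot_sup_eq,
    Subgroup.map_top_of_surjective _ (QuotientGroup.mk'_surjective M), commutator_def,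
    Subgroup.map_commutator, Subgroup.map_top_of_surjective _ (QuotientGroup.mk'_surjective M)] at h2
  exact h2

/-- The action on the abelianization induced by an action on `V`, written additively. -/
def abelianizedAction (X V : Type*) [Group X] [Group V] [MulDistribMulAction X V] :
    X →* AddMonoid.End (Additive (Abelianization V)) where
  toFun x := MonoidHom.toAdditive (Abelianization.map (MulDistribMulAction.toMonoidHom V x))
  map_one' := by
    refine AddMonoidHom.ext fun a => ?_
    induction a using Additive.rec with | _ a =>
    induction a using QuotientGroup.induction_on with
    | H v =>
      change Additive.ofMul (Abelianization.of ((1 : X) • v)) = Additive.ofMul (Abelianization.of v)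
      rw [one_smul]
  map_mul' x y := by
    refine AddMonoidHom.ext fun a => ?_
    induction a using Additive.rec with | _ a =>
    induction a using QuotientGroup.induction_on with
    | H v =>
      change Additive.ofMul (Abelianization.of ((x * y) • v)) =
        Additive.ofMul (Abelianization.of (x • y • v))
      rw [mul_smul]

lemma abelianizedAction_apply {X V : Type*} [Group X] [Group V] [MulDistribMulAction X V]
    (x : X) (v : V) : abelianizedAction X V x (Additive.ofMul (Abelianization.of v)) =
      Additive.ofMul (Abelianization.of (x • v)) := rfl

/-- A faithful coprime action on a nilpotent group stays faithful on the abelianization. -/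
lemma abelianizedAction_injective {X V : Type*} [Group X] [Group V] [Finite X] [Finite V]
    [MulDistribMulAction X V] [FaithfulSMul X V] (hV : Group.IsNilpotent V)
    (hcop : Nat.Coprime (Nat.card X) (Nat.card V)) {x : X} (hx : abelianizedAction X V x = 1) :
    x = 1 := by
  by_contra hx1
  obtain ⟨p, hp, hpx⟩ := Nat.exists_prime_and_dvd (mt orderOf_eq_one_iff.mp hx1)
  have := Fact.mk hp
  have hpV : ¬ p ∣ Nat.card V := fun h =>
    Nat.not_coprime_of_dvd_of_dvd hp.one_lt (hpx.trans (orderOf_dvd_natCard x)) h hcop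
  obtain ⟨k, hk⟩ := hpx
  have hord : orderOf (x ^ k) = p := by
    have hk0 : k ≠ 0 := by
      rintro rfl
      exact (orderOf_pos x).ne' (by simpa using hk)
    rw [orderOf_pow_of_dvd hk0 ⟨p, by rw [hk, mul_comm]⟩, hk,
      Nat.mul_div_cancel _ (Nat.pos_of_ne_zero hk0)]
  have hker : Subgroup.zpowers (x ^ k) ≤ (abelianizedAction X V).ker := by
    rw [Subgroup.zpowers_le, MonoidHom.mem_ker, map_pow, hx, one_pow]
  have hpg : IsPGroup p (Subgroup.zpowers (x ^ k)) :=
    IsPGroup.of_card (n := 1) (by rw [Nat.card_zpowers, hord, pow_one])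
  generalize hA : Subgroup.zpowers (x ^ k) = A at hker hpg
  have htriv : ∀ (a : A) (v : V), Abelianization.of (a • v) = Abelianization.of v := by
    intro a v
    have h1 := congrArg
      (fun T : AddMonoid.End (Additive (Abelianization V)) =>
        T (Additive.ofMul (Abelianization.of v))) (MonoidHom.mem_ker.mp (hker a.2))
    exact h1
  -- Each coset of the commutator subgroup contains a fixed point of the `p`-group `A`.
  have hfix : ∀ u : V, ∃ w ∈ FixedPoints.subgroup A V, Abelianization.of w = Abelianization.of u := by
    intro u
    let α : SubMulAction A V :=
      { carrier := {w | Abelianization.of w = Abelianization.of u}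
        smul_mem' := fun a w hw => (htriv a w).trans hw }
    have hcard : Nat.card α = Nat.card (commutator V) := by
      refine Nat.card_congr
        { toFun := fun w => ⟨u⁻¹ * w, QuotientGroup.eq.mp (Eq.symm w.2)⟩
          invFun := fun c => ⟨u * c, Eq.symm (QuotientGroup.eq.mpr (by simp))⟩
          left_inv := fun w => by simp
          right_inv := fun c => by simp }
    obtain ⟨w, hw⟩ := hpg.nonempty_fixed_point_of_prime_not_dvd_card α
      (fun h => hpV ((hcard ▸ h).trans (Subgroup.card_subgroup_dvd_card _)))
    exact ⟨w, fun a => congrArg Subtype.val (hw a), w.2⟩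
  have htop : FixedPoints.subgroup A V = ⊤ := by
    refine eq_top_of_sup_commutator hV (eq_top_iff.mpr fun u _ => ?_)
    obtain ⟨w, hw, hwu⟩ := hfix u
    have h1 : w⁻¹ * u ∈ commutator V := QuotientGroup.eq.mp hwu
    simpa using Subgroup.mul_mem_sup hw h1
  have h1 : x ^ k = 1 := by
    refine FaithfulSMul.eq_of_smul_eq_smul (α := V) fun v => ?_
    rw [one_smul]
    have h2 : v ∈ FixedPoints.subgroup A V := htop ▸ Subgroup.mem_top v
    exact h2 ⟨x ^ k, hA ▸ Subgroup.mem_zpowers _⟩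
  rw [h1, orderOf_one] at hord
  exact hp.one_lt.ne hord

end RegularOrbit

/-- **Lemma 2.3.** Let `X` be a nilpotent finite group of odd order acting faithfully by
automorphisms on a nontrivial nilpotent finite group `V` of odd order with
`gcd(|X|,|V|) = 1`.  Then `X` has at least two regular orbits on `V`; in particular
`|X| ≤ (|V| - 1)/2`, i.e. `2·|X| ≤ |V| - 1`. -/
theorem nilpotent_action_two_regular_orbits
    {X V : Type*} [Group X] [Group V] [Finite X] [Finite V] [Nontrivial V]
    [MulDistribMulAction X V] [FaithfulSMul X V]
    (hX : Group.IsNilpotent X) (hXodd : Odd (Nat.card X))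
    (hV : Group.IsNilpotent V) (hVodd : Odd (Nat.card V))
    (hcop : Nat.Coprime (Nat.card X) (Nat.card V)) :
    (∃ v w : V, MulAction.orbit X v ≠ MulAction.orbit X w ∧
      (∀ x : X, x • v = v → x = 1) ∧ (∀ x : X, x • w = w → x = 1)) ∧
    2 * Nat.card X ≤ Nat.card V - 1 := by
  have hsq : ∀ v : V, v⁻¹ = v → v = 1 := by
    intro v hv
    have h2 : v ^ 2 = 1 := by
      rw [pow_two]; nth_rewrite 1 [← hv]; simp
    obtain ⟨k, hk⟩ := hVodd
    have h3 : v ^ Nat.card V = 1 := pow_card_eq_one'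
    rwa [hk, pow_succ, pow_mul, h2, one_pow, one_mul] at h3
  -- A nontrivial element with trivial stabilizer.
  obtain ⟨v, hv1, hv⟩ : ∃ v : V, v ≠ 1 ∧ ∀ x : X, x • v = v → x = 1 := by
    have hdvd : Nat.card (Additive (Abelianization V)) ∣ Nat.card V :=
      Subgroup.card_quotient_dvd_card (commutator V)
    have hfin : Finite (Additive (Abelianization V)) :=
      inferInstanceAs (Finite (V ⧸ commutator V))
    obtain ⟨a, ha⟩ := RegularOrbit.hasRegular_of_isNilpotent _
      (RegularOrbit.abelianizedAction X V) hX hXodd (hVodd.of_dvd_nat hdvd)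
      (hcop.coprime_dvd_right hdvd) rfl
    obtain ⟨v, hva⟩ : ∃ v : V, Additive.ofMul (Abelianization.of v) = a :=
      QuotientGroup.mk_surjective (s := commutator V) a.toMul
    have hv : ∀ x : X, x • v = v → x = 1 := by
      intro x hx
      refine RegularOrbit.abelianizedAction_injective hV hcop (ha x ?_)
      rw [← hva, RegularOrbit.abelianizedAction_apply, hx]
    by_cases hv1 : v = 1
    · obtain ⟨u, hu⟩ := exists_ne (1 : V)
      exact ⟨u, hu, fun x _ => hv x (by rw [hv1, smul_one])⟩
    · exact ⟨v, hv1, hv⟩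
  have hv' : ∀ x : X, x • v⁻¹ = v⁻¹ → x = 1 := fun x hx => hv x (by
    rwa [smul_inv', inv_inj] at hx)
  have hne : MulAction.orbit X v ≠ MulAction.orbit X v⁻¹ := by
    intro h
    obtain ⟨x, hx⟩ : v⁻¹ ∈ MulAction.orbit X v := h ▸ MulAction.mem_orbit_self _
    change x • v = v⁻¹ at hx
    have h2 : x ^ 2 = 1 := hv _ (by rw [pow_two, mul_smul, hx, smul_inv', hx, inv_inv])
    have h3 : x = 1 := by
      obtain ⟨k, hk⟩ := hXodd
      have h3 : x ^ Nat.card X = 1 := pow_card_eq_one'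
      rwa [hk, pow_succ, pow_mul, h2, one_pow, one_mul] at h3
    rw [h3, one_smul] at hx
    exact hv1 (hsq v hx.symm)
  refine ⟨⟨v, v⁻¹, hne, hv, hv'⟩, ?_⟩
  have hcard : ∀ u : V, (∀ x : X, x • u = u → x = 1) →
      (MulAction.orbit X u).ncard = Nat.card X := by
    intro u hu
    rw [MulAction.orbit, ← Set.image_univ, Set.ncard_image_of_injective, Set.ncard_univ]
    intro x y hxy
    have h1 : (y⁻¹ * x) • u = u := by
      rw [mul_smul, inv_smul_eq_iff]; exact hxy
    exact (inv_mul_eq_one.mp (hu _ h1)).symm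
  have hdisj : Disjoint (MulAction.orbit X v) (MulAction.orbit X v⁻¹) :=
    (MulAction.orbit.eq_or_disjoint v v⁻¹).resolve_left hne
  have hone : ∀ u : V, u ≠ 1 → (1 : V) ∉ MulAction.orbit X u := by
    rintro u hu ⟨x, hx⟩
    change x • u = 1 at hx
    exact hu (by rw [← inv_smul_smul x u, hx, smul_one])
  have hsub : MulAction.orbit X v ∪ MulAction.orbit X v⁻¹ ⊆ {(1 : V)}ᶜ := by
    rintro u (hu | hu) rfl
    · exact hone v hv1 hu
    · exact hone v⁻¹ (inv_ne_one.mpr hv1) hu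
  have h1 := Set.ncard_le_ncard hsub (Set.toFinite _)
  rw [Set.ncard_union_eq hdisj (Set.toFinite _) (Set.toFinite _), hcard v hv, hcard _ hv',
    Set.ncard_compl, Set.ncard_singleton] at h1
  lia
end

section
/- Let G be a finite group containing two elements of order 2 that are not conjugate in G (i.e., G has at least two conjugacy classes of involutions). Then there exists an element u of order 2 in G such that |G| < |C_G(u)|^3. -/
/-!
Two non-conjugate involutions `s`, `t` generate a dihedral group in which `s * t` has even order,
so the involution in `⟨s * t⟩` commutes with both (`exists_involution_commute_commute`).

Let `w` be an involution whose centralizer has the largest order `c`, and fix non-conjugate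
involutions `u`, `v`. Every conjugate of `v` is still not conjugate to `u`, so it lies in `C_G(z)`
for some involution `z ∈ C_G(u)`. There are at most `c - 1` such `z`, and each `C_G(z)` has at most
`c` elements; hence the class of `v` has at most `(c - 1) * c` elements, and
`|G| = |v^G| * |C_G(v)| ≤ (c - 1) * c * c < c ^ 3`.
-/

/-- Some involution commutes with both of two given non-conjugate involutions: the product `s * t`
is inverted by `s` and `t`; if its order were odd, a power of it would conjugate `s` to `t`, and if
its order is `k + k`, then `(s * t) ^ k` is the required involution. -/
theorem exists_involution_commute_commute {G : Type*} [Group G] [Finite G] {s t : G}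
    (hs : orderOf s = 2) (ht : orderOf t = 2) (hst : ¬ IsConj s t) :
    ∃ z : G, orderOf z = 2 ∧ Commute s z ∧ Commute z t := by
  have hs2 : s * s = 1 := by rw [← pow_two, ← hs, pow_orderOf_eq_one]
  have ht2 : t * t = 1 := by rw [← pow_two, ← ht, pow_orderOf_eq_one]
  have hsi : s⁻¹ = s := inv_eq_of_mul_eq_one_left hs2
  have hti : t⁻¹ = t := inv_eq_of_mul_eq_one_left ht2
  obtain ⟨a, ha⟩ : ∃ a, a = s * t := ⟨_, rfl⟩
  have hta : t = s * a := by rw [ha, ← mul_assoc, hs2, one_mul]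
  have hsa : SemiconjBy s a a⁻¹ := by
    rw [SemiconjBy, ha, mul_inv_rev, hsi, hti, mul_assoc t, hs2, ← mul_assoc, hs2, one_mul, mul_one]
  have hsp (n : ℕ) : s * a ^ n = (a ^ n)⁻¹ * s := by
    rw [← inv_pow]; exact hsa.pow_right n
  rcases Nat.even_or_odd' (orderOf a) with ⟨k, hk | hk⟩
  · have hpos : 0 < orderOf a := orderOf_pos a
    have hkk : a ^ k * a ^ k = 1 := by
      rw [← pow_add, ← two_mul, ← hk, pow_orderOf_eq_one]
    have hcomm : Commute s (a ^ k) := by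
      rw [Commute, SemiconjBy, hsp, inv_eq_of_mul_eq_one_left hkk]
    refine ⟨a ^ k, ?_, hcomm, ?_⟩
    · refine orderOf_eq_prime (by rw [pow_two, hkk]) fun h => ?_
      have := orderOf_le_of_pow_eq_one (by omega) h
      omega
    · rw [hta]
      exact hcomm.symm.mul_right ((Commute.refl a).pow_left k)
  · refine absurd (isConj_iff.2 ⟨a ^ k, ?_⟩) hst
    -- `a ^ k * s * a ^ (-k) = s * a ^ (-2 * k) = s * a`, since `a` has order `2 * k + 1`.
    have h1 : a ^ k * a ^ k * a = 1 := by
      rw [← pow_add, ← two_mul, ← pow_succ, ← hk, pow_orderOf_eq_one]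
    have h2 : a ^ k * s = s * (a ^ k)⁻¹ := by
      rw [eq_mul_inv_iff_mul_eq, mul_assoc, hsp, mul_inv_cancel_left]
    rw [h2, hta, mul_assoc, ← mul_inv_rev, inv_eq_of_mul_eq_one_right h1]

/-- **Brauer–Fowler (Lemma 2.8).** If a finite group `G` contains two non-conjugate
involutions, then there is an involution `u ∈ G` with `|G| < |C_G(u)|^3`. -/
theorem exists_involution_card_lt_centralizer_cube_of_two_classes
    {G : Type*} [Group G] [Finite G]
    (u v : G) (hu : orderOf u = 2) (hv : orderOf v = 2) (huv : ¬ IsConj u v) :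
    ∃ w : G, orderOf w = 2 ∧
      Nat.card G < Nat.card (Subgroup.centralizer {w} : Subgroup G) ^ 3 := by
  classical
  have := Fintype.ofFinite G
  let C : G → Finset G := fun g => {x | Commute g x}
  have hC (g : G) : Nat.card (Subgroup.centralizer {g} : Subgroup G) = (C g).card := by
    refine Nat.subtype_card _ fun x => ?_
    simp only [C, Finset.mem_filter_univ, Subgroup.mem_centralizer_iff, Set.mem_singleton_iff,
      forall_eq]
    rfl
  obtain ⟨w, hw, hmax⟩ := Finset.exists_max_image ({x | orderOf x = 2} : Finset G)
    (fun x => (C x).card) ⟨u, by simpa using hu⟩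
  simp only [Finset.mem_filter, Finset.mem_univ, true_and] at hw hmax
  refine ⟨w, hw, ?_⟩
  rw [hC]
  let Y : Finset G := {y | IsConj y v}
  have hcard : Nat.card G = Y.card * (C v).card := by
    have h := MulAction.card_orbit_mul_card_stabilizer_eq_card_group (ConjAct G) v
    rw [← Nat.card_eq_fintype_card, ← Nat.card_eq_fintype_card, ← Nat.card_eq_fintype_card,
      ← Subgroup.nat_card_centralizer_nat_card_stabilizer, hC] at h
    have hY : Nat.card (MulAction.orbit (ConjAct G) v) = Y.card := by
      refine Nat.subtype_card _ fun x => ?_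
      simp [Y, ConjAct.mem_orbit_conjAct]
    rw [← hY, h]
    rfl
  let Z : Finset G := {z ∈ C u | orderOf z = 2}
  have hYsub : Y ⊆ Z.biUnion C := by
    intro y hy
    have hyv : IsConj y v := by simpa [Y] using hy
    have hy2 : orderOf y = 2 := by
      obtain ⟨g, rfl⟩ := isConj_iff.1 hyv.symm
      rw [← hv]
      exact orderOf_injective (MulAut.conj g).toMonoidHom (MulAut.conj g).injective v
    obtain ⟨z, hz, huz, hzy⟩ :=
      exists_involution_commute_commute hu hy2 fun h => huv (h.trans hyv)
    simp only [Finset.mem_biUnion, Finset.mem_filter, Finset.mem_univ, true_and, Z, C]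
    exact ⟨z, ⟨huz, hz⟩, hzy⟩
  have hYle : Y.card ≤ Z.card * (C w).card := by
    refine (Finset.card_le_card hYsub).trans (Finset.card_biUnion_le_card_mul _ _ _ fun z hz => ?_)
    exact hmax z (Finset.mem_filter.1 hz).2
  -- The identity lies in `C u` but is not an involution.
  have hZlt : Z.card < (C w).card := by
    refine (Finset.card_lt_card (Finset.filter_ssubset.2 ⟨1, ?_, ?_⟩)).trans_le (hmax u hu)
    · simp [C]
    · simp
  have hpos : 0 < (C w).card := by omega
  calc Nat.card G = Y.card * (C v).card := hcard
    _ ≤ (Z.card * (C w).card) * (C w).card := Nat.mul_le_mul hYle (hmax v hv)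
    _ < ((C w).card * (C w).card) * (C w).card := by gcongr
    _ = (C w).card ^ 3 := by ring
end

section
/- Let G be a finite group of even order, let t be an element of order 2 in G, and let N be a nontrivial Abelian subgroup of G such that |C_G(x)|^3 < |G| for every x ∈ N with x ≠ 1. Then |N| < √2 · |C_G(t)|; equivalently, |N|^2 < 2 · |C_G(t)|^2. -/
/-!
Write `n = |N|`, `c = |C_G(t)|`, `g = |G|`, and let `T` be the conjugacy class of `t`, so that
`|T| = g / c`. The proof counts how `T` is distributed over the `g / n` cosets of `N`. If `u` and
`u * x` both lie in `T`, then `u` inverts `x`, because both are involutions; and at most `|C_G(x)|`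
elements of `G` invert `x`. Let `M` be the largest `|C_G(x)|` for `x ∈ N`, `x ≠ 1`. As `N` is
abelian, `n` divides each `|C_G(x)|`.

* If `M ≥ 2n`, the Cauchy-Schwarz inequality for the sizes of `T ∩ uN` gives
  `|T|² ≤ (g / n) (|T| + (n - 1) M)` (`sq_card_le`), that is `g (n - c) ≤ (n - 1) M c²`. Together
  with `M³ < g` and `M ≥ 2n` this yields `4n² (n - c) < (n - 1) c²`, which is incompatible with
  `n² ≥ 2c²` (`sq_lt_of_two_mul_le`).
* Otherwise `C_G(x) = N` for every `x ∈ N`, `x ≠ 1`, and in fact `n ≤ c`. If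
  `T` meets `N` in some `u`, then `c = |C_G(u)| = n`; so let `T` be disjoint from `N`. An involution `u ∉ N`
  which inverts one nontrivial element of `N` normalizes `N` and acts on it without nontrivial
  fixed points, so it inverts all of `N` (`inverts_all`). Two such involutions differ by an element
  centralizing `N`, hence by an element of `N`; so they all lie in one coset, and every other
  element of `T` is alone in its coset. Therefore `g / c ≤ g / n + n`, and `n³ < g` forces `n ≤ c`.
-/

open Finset

open scoped Classical in
lemma card_isConj_mul {G : Type*} [Group G] [Fintype G] (t : G) :
    #{u : G | IsConj u t} * Nat.card (Subgroup.centralizer {t} : Subgroup G) = Nat.card G := by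
  rw [Subgroup.nat_card_centralizer_nat_card_stabilizer]
  have h := (MulAction.stabilizer (ConjAct G) t).index_mul_card
  rw [MulAction.index_stabilizer] at h
  rw [show Nat.card G = Nat.card (ConjAct G) from rfl, ← h, ← Set.ncard_coe_finset]
  congr 2
  ext u
  simp [ConjAct.mem_orbit_conjAct]

open scoped Classical in
lemma card_inverting_le {G : Type*} [Group G] [Fintype G] (x : G) :
    #{u : G | u * x * u⁻¹ = x⁻¹} ≤ Nat.card (Subgroup.centralizer {x} : Subgroup G) := by
  rcases Finset.eq_empty_or_nonempty ({u : G | u * x * u⁻¹ = x⁻¹} : Finset G) with h | ⟨v, hv⟩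
  · rw [h]; simp
  · have hv : v * x * v⁻¹ = x⁻¹ := by simpa using hv
    rw [← SetLike.coe_sort_coe, Nat.card_coe_set_eq, ← Set.ncard_coe_finset]
    refine Set.ncard_le_ncard_of_injOn (fun u => v⁻¹ * u) ?_ (by intro a _ b _ h; simpa using h)
      (Set.toFinite _)
    intro u hu
    have hu : u * x * u⁻¹ = x⁻¹ := by simpa using hu
    rw [SetLike.mem_coe, Subgroup.mem_centralizer_singleton_iff]
    have h1 : u * x = x⁻¹ * u := by rw [← hu]; group
    have h2 : v⁻¹ * x⁻¹ = x * v⁻¹ := by rw [← hv]; group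
    rw [mul_assoc, h1, ← mul_assoc, h2, mul_assoc]

lemma inverts_of_mul {G : Type*} [Group G] {u x : G} (hu : u * u = 1)
    (hux : u * x * (u * x) = 1) : u * x * u⁻¹ = x⁻¹ := by
  have : u⁻¹ = u := inv_eq_of_mul_eq_one_left hu
  rw [this, eq_inv_iff_mul_eq_one, ← hux]; group

lemma mul_self_of_isConj {G : Type*} [Group G] {t u : G} (ht : t * t = 1) (h : IsConj u t) :
    u * u = 1 := by
  obtain ⟨c, hc⟩ := isConj_iff.1 h.symm
  rw [← hc]
  calc c * t * c⁻¹ * (c * t * c⁻¹) = c * (t * t) * c⁻¹ := by group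
    _ = 1 := by rw [ht]; group

open scoped Classical in
/-- Cauchy-Schwarz for the distribution of a set `T` of involutions over the left cosets of `N`;
the sum of the squares of the sizes of `T ∩ uN` counts the pairs `(u, x)` with `u, u * x ∈ T` and
`x ∈ N`. -/
lemma sq_card_le {G : Type*} [Group G] [Fintype G] (N : Subgroup G) (T : Finset G)
    (hT : ∀ u ∈ T, u * u = 1) (M : ℕ)
    (hM : ∀ x ∈ N, x ≠ 1 → Nat.card (Subgroup.centralizer {x} : Subgroup G) ≤ M) :
    #T ^ 2 ≤ Nat.card (G ⧸ N) * (#T + (Nat.card N - 1) * M) := by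
  have h1 : #T = ∑ q : G ⧸ N, #{u ∈ T | (QuotientGroup.mk u : G ⧸ N) = q} :=
    card_eq_sum_card_fiberwise fun _ _ => by simp
  have h2 := sq_sum_le_card_mul_sum_sq (s := (univ : Finset (G ⧸ N)))
    (f := fun q => #{u ∈ T | (QuotientGroup.mk u : G ⧸ N) = q})
  rw [← h1, Finset.card_univ, ← Nat.card_eq_fintype_card] at h2
  refine h2.trans (Nat.mul_le_mul_left _ ?_)
  set NF : Finset G := {x : G | x ∈ N} with hNF
  have hcard : #NF = Nat.card N := by
    rw [← SetLike.coe_sort_coe, Nat.card_coe_set_eq, ← Set.ncard_coe_finset]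
    congr 1; ext; simp [hNF]
  have h3 : ∑ q : G ⧸ N, #{u ∈ T | (QuotientGroup.mk u : G ⧸ N) = q} ^ 2
      = ∑ x ∈ NF, #{u ∈ T | u * x ∈ T} := by
    have e1 : ∑ x ∈ NF, #{u ∈ T | u * x ∈ T} = ∑ u ∈ T, #{x ∈ NF | u * x ∈ T} := by
      simp only [Finset.card_filter]
      exact Finset.sum_comm
    have e2 : ∀ u ∈ T, #{x ∈ NF | u * x ∈ T} =
        #{v ∈ T | (QuotientGroup.mk v : G ⧸ N) = QuotientGroup.mk u} := by
      intro u _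
      refine Finset.card_bij (fun x _ => u * x) ?_ (by intro a _ b _ h; simpa using h) ?_
      · intro x hx
        simp only [hNF, mem_filter, mem_univ, true_and] at hx ⊢
        exact ⟨hx.2, (QuotientGroup.eq.2 (by simpa using hx.1)).symm⟩
      · intro v hv
        simp only [hNF, mem_filter, mem_univ, true_and] at hv ⊢
        refine ⟨u⁻¹ * v, ⟨QuotientGroup.eq.1 hv.2.symm, by simpa using hv.1⟩, by simp⟩
    rw [e1, Finset.sum_congr rfl e2,
      ← Finset.sum_fiberwise_of_maps_to (t := (univ : Finset (G ⧸ N)))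
        (g := fun u : G => (u : G ⧸ N)) (by simp)]
    refine Finset.sum_congr rfl fun q _ => ?_
    rw [Finset.sum_congr rfl (g := fun _ => #{u ∈ T | (QuotientGroup.mk u : G ⧸ N) = q})]
    · simp [sq]
    · intro u hu
      rw [(mem_filter.1 hu).2]
  rw [h3, ← Finset.add_sum_erase NF _ (show (1 : G) ∈ NF by simp [hNF, N.one_mem])]
  refine Nat.add_le_add (by simp) ?_
  rw [← hcard, ← Finset.card_erase_of_mem (show (1 : G) ∈ NF by simp [hNF, N.one_mem]),
    ← smul_eq_mul]
  refine Finset.sum_le_card_nsmul _ _ _ fun x hx => ?_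
  simp only [hNF, mem_erase, mem_filter, mem_univ, true_and] at hx
  refine le_trans (Finset.card_le_card ?_) ((card_inverting_le x).trans (hM x hx.2 hx.1))
  intro u hu
  simp only [mem_filter, mem_univ, true_and] at hu ⊢
  exact inverts_of_mul (hT u hu.1) (hT _ hu.2)

/-- If the centralizer of every nontrivial element of the abelian subgroup `N` is `N`, then an
involution outside `N` inverting one nontrivial element of `N` inverts them all. -/
lemma inverts_all {G : Type*} [Group G] (N : Subgroup G)
    (hNab : ∀ a b : G, a ∈ N → b ∈ N → a * b = b * a)
    (hC : ∀ x ∈ N, x ≠ 1 → ∀ y, y * x = x * y → y ∈ N)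
    {u x : G} (hu : u * u = 1) (huN : u ∉ N) (hx : x ∈ N) (hx1 : x ≠ 1)
    (h : u * x * u⁻¹ = x⁻¹) : ∀ y ∈ N, u * y * u⁻¹ = y⁻¹ := by
  intro y hy
  have hui : u⁻¹ = u := inv_eq_of_mul_eq_one_left hu
  have hy' : u * y * u⁻¹ ∈ N := by
    refine hC x⁻¹ (N.inv_mem hx) (by simpa using hx1) _ ?_
    rw [← h]
    calc u * y * u⁻¹ * (u * x * u⁻¹) = u * (y * x) * u⁻¹ := by group
      _ = u * (x * y) * u⁻¹ := by rw [hNab y x hy hx]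
      _ = _ := by group
  -- The norm of `y` under the action of `u` is fixed by `u`, hence trivial.
  by_contra hne
  refine huN (hC (u * y * u⁻¹ * y) (N.mul_mem hy' hy) ?_ u ?_)
  · rwa [Ne, ← eq_inv_iff_mul_eq_one]
  · calc u * (u * y * u⁻¹ * y) = (u * u) * y * u⁻¹ * y := by group
      _ = y * (u * y) := by rw [hu, hui]; group
      _ = y * (u * y * u⁻¹) * u := by group
      _ = _ := by rw [hNab _ _ hy hy']

open scoped Classical in
/-- The case where `N` is the centralizer of each of its nontrivial elements. -/
lemma card_le_of_self_centralizing {G : Type*} [Group G] [Fintype G] (t : G) (ht : t * t = 1)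
    (ht1 : t ≠ 1) (N : Subgroup G)
    (hNab : ∀ a b : G, a ∈ N → b ∈ N → a * b = b * a)
    (hC : ∀ x ∈ N, x ≠ 1 → Subgroup.centralizer {x} = N)
    (hg : Nat.card N ^ 3 < Nat.card G) :
    Nat.card N ≤ Nat.card (Subgroup.centralizer {t} : Subgroup G) := by
  set T : Finset G := {u : G | IsConj u t} with hTdef
  have hTinv : ∀ u ∈ T, u * u = 1 := fun u hu => mul_self_of_isConj ht (by simpa [hTdef] using hu)
  have hTc := card_isConj_mul t
  rw [← hTdef] at hTc
  have hgpos : 0 < Nat.card G := Nat.card_pos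
  by_cases hTN : ∃ u ∈ T, u ∈ N
  · obtain ⟨u, huT, huN⟩ := hTN
    have hut : IsConj u t := by simpa [hTdef] using huT
    have hu1 : u ≠ 1 := by
      rintro rfl
      exact ht1 (isConj_one_right.1 hut)
    have hc := card_isConj_mul u
    have hTT : ({v : G | IsConj v u} : Finset G) = T := by
      ext v
      simp only [hTdef, mem_filter, mem_univ, true_and]
      exact ⟨fun h => h.trans hut, fun h => h.trans hut.symm⟩
    rw [hTT, hC u huN hu1, ← hTc] at hc
    have hTpos : 0 < #T := by
      rcases Nat.eq_zero_or_pos #T with h | h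
      · rw [h] at hTc; omega
      · exact h
    exact (Nat.eq_of_mul_eq_mul_left hTpos hc).le
  · push Not at hTN
    have hC' : ∀ x ∈ N, x ≠ 1 → ∀ y, y * x = x * y → y ∈ N := by
      intro x hx hx1 y hy
      rw [← hC x hx hx1, Subgroup.mem_centralizer_singleton_iff]
      exact hy
    -- `B` consists of the elements of `T` that invert some nontrivial element of `N`.
    set B : Finset G := {u ∈ T | ∃ x ∈ N, x ≠ 1 ∧ u * x * u⁻¹ = x⁻¹} with hB
    have hBn : #B ≤ Nat.card N := by
      rcases Finset.eq_empty_or_nonempty B with h | ⟨v, hv⟩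
      · rw [h]; simp
      · rw [← SetLike.coe_sort_coe, Nat.card_coe_set_eq, ← Set.ncard_coe_finset]
        refine Set.ncard_le_ncard_of_injOn (fun u => v⁻¹ * u) ?_
          (by intro a _ b _ h; simpa using h) (Set.toFinite _)
        intro u hu
        obtain ⟨hvT, x, hx, hx1, hvx⟩ := mem_filter.1 hv
        obtain ⟨huT, y, hy, hy1, huy⟩ := mem_filter.1 (mem_coe.1 hu)
        have hux := inverts_all N hNab hC' (hTinv u huT) (hTN u huT) hy hy1 huy x hx
        refine hC' x hx hx1 _ ?_
        have h1 : u * x = x⁻¹ * u := by rw [← hux]; group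
        have h2 : v⁻¹ * x⁻¹ = x * v⁻¹ := by rw [← hvx]; group
        rw [mul_assoc, h1, ← mul_assoc, h2, mul_assoc]
    have hTB : #(T \ B) ≤ Nat.card (G ⧸ N) := by
      rw [Nat.card_eq_fintype_card, ← Finset.card_univ]
      refine Finset.card_le_card_of_injOn (fun u => (u : G ⧸ N)) (by simp) ?_
      intro u hu v hv huv
      have hu := mem_sdiff.1 (mem_coe.1 hu)
      have hv := mem_sdiff.1 (mem_coe.1 hv)
      by_contra hne
      refine hu.2 (mem_filter.2 ⟨hu.1, u⁻¹ * v, QuotientGroup.eq.1 huv, ?_, ?_⟩)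
      · intro h
        exact hne (inv_mul_eq_one.1 h)
      · exact inverts_of_mul (hTinv u hu.1) (by simpa using hTinv v hv.1)
    have hTle : #T ≤ Nat.card (G ⧸ N) + Nat.card N := by
      have := Finset.card_le_card_sdiff_add_card (s := T) (t := B)
      omega
    have hm := N.card_eq_card_quotient_mul_card_subgroup
    have hc0 : 0 < Nat.card (Subgroup.centralizer {t} : Subgroup G) := Nat.card_pos
    have hn0 : 0 < Nat.card N := Nat.card_pos
    generalize Nat.card (Subgroup.centralizer {t} : Subgroup G) = c at *
    generalize Nat.card (G ⧸ N) = m at *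
    generalize Nat.card N = n at *
    generalize Nat.card G = g at *
    generalize #T = τ at *
    by_contra hlt
    push Not at hlt
    obtain ⟨d, rfl⟩ := Nat.exists_eq_add_of_lt hlt
    have h1 : g * (c + d + 1) ≤ g * c + (c + d + 1) ^ 2 * c := by
      calc g * (c + d + 1) = τ * c * (c + d + 1) := by rw [hTc]
        _ ≤ (m + (c + d + 1)) * c * (c + d + 1) := by gcongr
        _ = m * (c + d + 1) * c + (c + d + 1) ^ 2 * c := by ring
        _ = _ := by rw [← hm]
    nlinarith [Nat.zero_le (g * d), sq_nonneg (c + d + 1), Nat.zero_le ((c + d + 1) ^ 2 * d)]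

lemma sq_lt_of_two_mul_le {n c g m τ M : ℕ} (hn0 : 0 < n) (hTc : τ * c = g)
    (hm : g = m * n) (hS : τ ^ 2 ≤ m * (τ + (n - 1) * M)) (hM : M ^ 3 < g) (hMn : 2 * n ≤ M) :
    n ^ 2 < 2 * c ^ 2 := by
  by_contra hcon
  push Not at hcon
  have hg : 0 < g := by omega
  have hc0 : 0 < c := Nat.pos_of_ne_zero (by rintro rfl; omega)
  have hcn : c < n := by nlinarith
  obtain ⟨d, rfl⟩ := Nat.exists_eq_add_of_lt hcn
  rw [show c + d + 1 - 1 = c + d by omega] at hS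
  have h1 : g * (g * (c + d + 1)) ≤ g * (g * c + (c + d) * M * c ^ 2) := by
    calc g * (g * (c + d + 1)) = τ ^ 2 * (c ^ 2 * (c + d + 1)) := by rw [← hTc]; ring
      _ ≤ m * (τ + (c + d) * M) * (c ^ 2 * (c + d + 1)) := by gcongr
      _ = (m * (c + d + 1)) * ((τ * c) * c + (c + d) * M * c ^ 2) := by ring
      _ = _ := by rw [← hm, hTc]
  have h2 : g * (d + 1) ≤ (c + d) * M * c ^ 2 := by
    have := Nat.le_of_mul_le_mul_left h1 hg
    nlinarith
  have hM0 : 0 < M := by omega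
  have h3 : M ^ 2 * (d + 1) < (c + d) * c ^ 2 := by
    have : M * (M ^ 2 * (d + 1)) < M * ((c + d) * c ^ 2) := by
      calc M * (M ^ 2 * (d + 1)) = M ^ 3 * (d + 1) := by ring
        _ < g * (d + 1) := by gcongr
        _ ≤ _ := h2
        _ = _ := by ring
    exact Nat.lt_of_mul_lt_mul_left this
  have h4 : c ^ 2 * (8 * (d + 1)) < c ^ 2 * (c + d) := by
    calc c ^ 2 * (8 * (d + 1)) = 4 * (2 * c ^ 2) * (d + 1) := by ring
      _ ≤ 4 * (c + d + 1) ^ 2 * (d + 1) := by gcongr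
      _ = (2 * (c + d + 1)) ^ 2 * (d + 1) := by ring
      _ ≤ M ^ 2 * (d + 1) := by gcongr
      _ < _ := h3
      _ = _ := by ring
  have h5 := Nat.lt_of_mul_lt_mul_left h4
  nlinarith


/-- **Theorem 8.2(i).** Let `G` be a finite group of even order, `t ∈ G` an involution, and
`N` a nontrivial Abelian subgroup of `G` such that `|C_G(x)|^3 < |G|` for every non-identity
`x ∈ N`.  Then `|N| < √2·|C_G(t)|`, equivalently `|N|^2 < 2·|C_G(t)|^2`. -/
theorem abelian_subgroup_card_sq_lt_two_centralizer_sq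
    {G : Type*} [Group G] [Finite G] (hG : Even (Nat.card G))
    (t : G) (ht : orderOf t = 2)
    (N : Subgroup G) (hNne : N ≠ ⊥) (hNab : ∀ a b : G, a ∈ N → b ∈ N → a * b = b * a)
    (hsmall : ∀ x : G, x ∈ N → x ≠ 1 →
      Nat.card (Subgroup.centralizer {x} : Subgroup G) ^ 3 < Nat.card G) :
    Nat.card N ^ 2 < 2 * Nat.card (Subgroup.centralizer {t} : Subgroup G) ^ 2 := by
  classical
  have := Fintype.ofFinite G
  have ht2 : t * t = 1 := by rw [← sq, ← ht, pow_orderOf_eq_one]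
  have ht1 : t ≠ 1 := by rintro rfl; simp at ht
  have hle : ∀ x ∈ N, N ≤ Subgroup.centralizer {x} := fun x hx y hy =>
    Subgroup.mem_centralizer_singleton_iff.2 (hNab y x hy hx)
  obtain ⟨x₀, hx₀, hx₀1⟩ := N.bot_or_exists_ne_one.resolve_left hNne
  obtain ⟨x, hx, hmax⟩ := Finset.exists_max_image ({x : G | x ∈ N ∧ x ≠ 1} : Finset G)
    (fun x => Nat.card (Subgroup.centralizer {x} : Subgroup G)) ⟨x₀, by simpa using ⟨hx₀, hx₀1⟩⟩
  simp only [mem_filter, mem_univ, true_and] at hx hmax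
  obtain ⟨k, hk⟩ := Subgroup.card_dvd_of_le (hle x hx.1)
  have hn0 : 0 < Nat.card N := Nat.card_pos
  have hc0 : 0 < Nat.card (Subgroup.centralizer {t} : Subgroup G) := Nat.card_pos
  have hxs := hsmall x hx.1 hx.2
  by_cases hk2 : 2 ≤ k
  · refine sq_lt_of_two_mul_le hn0 (card_isConj_mul t) N.card_eq_card_quotient_mul_card_subgroup
      (sq_card_le N _ ?_ _ fun y hy hy1 => hmax y ⟨hy, hy1⟩) hxs ?_
    · intro u hu
      exact mul_self_of_isConj ht2 (by simpa using hu)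
    · rw [hk]; nlinarith
  · have hkn : Nat.card (Subgroup.centralizer {x} : Subgroup G) ≤ Nat.card N := by
      rw [hk]; nlinarith
    have := card_le_of_self_centralizing t ht2 ht1 N hNab
      (fun y hy hy1 => (Subgroup.eq_of_le_of_card_ge (hle y hy)
        ((hmax y ⟨hy, hy1⟩).trans hkn)).symm)
      (lt_of_le_of_lt (Nat.pow_le_pow_left (Subgroup.card_le_of_le (hle x hx.1)) 3) hxs)
    nlinarith
end
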